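/- arXiv:1704.06782 — 5 statements merged into one kernel-verified Lean document; each statement's English description precedes it below -/
import Mathlib

section
/- For every nondegenerate continuum W, if there exists a nondegenerate continuum Ŵ such that every nondegenerate subcontinuum of Ŵ admits a continuous surjection onto W, then there exists a hereditarily indecomposable hereditarily strongly infinite-dimensional Cantor manifold X such that every nondegenerate subcontinuum of X admits a continuous surjection onto W. -/
/-!
The space `X` is a closed subset of a countable power `M` of `Ŵ`. The property concerning maps onto
`W` is then automatic: a nondegenerate subcontinuum of `X` has a nondegenerate projection to some
coordinate, which is a subcontinuum of `Ŵ`. The other properties use only that `Ŵ` is a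
nondegenerate continuum.

Let `g : Ŵ → [0, 1]` be a Urysohn function separating two points. The functions `φ j = g ∘ π j` on
`M` form an essential family: whatever partitions are chosen between the faces `{φ j ≤ 0}` and
`{1 ≤ φ j}`, all of them have a common point (`essFam_pi`). Following chains of small steps in `Ŵ`
from one of the two points to the other, this reduces to a discrete Poincaré–Miranda theorem for
cubical grids (`exists_cube`), proved by cohomology mod 2.

Fix a uniformly dense sequence `ψ` of real functions on `M`, and split the coordinates into three
groups.

* For each `k`, one coordinate is used to choose an S-shaped partition folded along `ψ k`. Two
  intersecting subcontinua of this partition cannot be told apart by `ψ k` (`foldSep_key`), so in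
  the intersection of all of these partitions any two intersecting continua are comparable
  (`comparable_of_foldSep`), which is hereditary indecomposability.
* For each `j`, a sequence of coordinates is used to choose partitions such that every sequence of
  partitions between slightly smaller sets occurs on some level `ψ j = r` with `1/4 ≤ r ≤ 3/4`, the
  sequences of partitions being parametrized by a compact subset of the Cantor set
  (`exists_universal_sep`). A subspace of the common part of these partitions which meets all of
  these levels of some `ψ j` is therefore strongly infinite-dimensional, and one that misses a level
  of each `ψ j` has a base of clopen sets, hence dimension zero
  (`covDimLE_zero_or_stronglyInfiniteDimensional`).
* Three coordinates are left. By the essentiality of the whole family, their three pairs of faces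
  are still essential on the common part `Y` of all partitions chosen above. Let `X` be a minimal
  closed subset of `Y` on which they are essential. If a zero-dimensional closed set separated `X`,
  then `X` would be the union of two proper closed subsets on which the faces are inessential, and
  the partitions could be glued along the zero-dimensional set (`Colored.glue`), the third pair of
  faces giving the freedom needed for that. So no zero-dimensional closed set separates `X`.

Finally, strongly infinite-dimensional spaces are infinite-dimensional
(`StronglyInfiniteDimensional.not_covDimLE`), so by the dichotomy of the second item the
finite-dimensional subsets of `X` are zero-dimensional, and `X` is a Cantor manifold.
-/

open Set Topology TopologicalSpace

universe u v

/-- A continuum: a nonempty compact connected metrizable topological space. -/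
def IsContinuum (X : Type u) [TopologicalSpace X] : Prop :=
  Nonempty X ∧ CompactSpace X ∧ ConnectedSpace X ∧ MetrizableSpace X

/-- A subcontinuum of a space: a nonempty compact connected subset. -/
def IsSubcontinuum {X : Type u} [TopologicalSpace X] (S : Set X) : Prop :=
  IsCompact S ∧ IsConnected S

/-- The subset `S` is indecomposable: it is not the union of two proper subcontinua. -/
def IsIndecomposableSet {X : Type u} [TopologicalSpace X] (S : Set X) : Prop :=
  ¬ ∃ A B : Set X, IsSubcontinuum A ∧ IsSubcontinuum B ∧
      A ⊆ S ∧ B ⊆ S ∧ A ≠ S ∧ B ≠ S ∧ A ∪ B = S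

/-- An indecomposable space. -/
def IsIndecomposable (X : Type u) [TopologicalSpace X] : Prop :=
  IsIndecomposableSet (Set.univ : Set X)

/-- A hereditarily indecomposable space: every subcontinuum is indecomposable. -/
def HereditarilyIndecomposable (X : Type u) [TopologicalSpace X] : Prop :=
  ∀ S : Set X, IsSubcontinuum S → IsIndecomposableSet S

/-- Covering dimension `≤ n`: every finite open cover admits a finite open refinement
in which every point lies in at most `n + 1` members. -/
def CovDimLE (X : Type u) [TopologicalSpace X] (n : ℕ) : Prop :=
  ∀ (ι : Type) (U : ι → Set X), Finite ι → (∀ i, IsOpen (U i)) → (⋃ i, U i) = Set.univ →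
    ∃ (κ : Type) (V : κ → Set X), Finite κ ∧ (∀ j, IsOpen (V j)) ∧ (⋃ j, V j) = Set.univ ∧
      (∀ j, ∃ i, V j ⊆ U i) ∧ ∀ x : X, Nat.card {j : κ // x ∈ V j} ≤ n + 1

/-- Covering dimension `≤ m` for an integer `m`; for `m < 0` this means the space is empty. -/
def CovDimLEInt (X : Type u) [TopologicalSpace X] (m : ℤ) : Prop :=
  (0 ≤ m ∧ CovDimLE X m.toNat) ∨ (m < 0 ∧ IsEmpty X)

/-- Covering dimension equal to `n`: `dim X ≤ n` but not `dim X ≤ n - 1`. -/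
def CovDimEq (X : Type u) [TopologicalSpace X] (n : ℕ) : Prop :=
  CovDimLE X n ∧ ¬ CovDimLEInt X ((n : ℤ) - 1)

/-- An infinite-dimensional space: `dim X ≤ n` holds for no natural number `n`. -/
def InfiniteDimensional (X : Type u) [TopologicalSpace X] : Prop :=
  ∀ n : ℕ, ¬ CovDimLE X n

/-- An `n`-dimensional Cantor manifold: a compact metrizable space with `dim X = n` such that
no closed subset `L` with `dim L ≤ n - 2` disconnects `X`, i.e. `X ∖ L` is connected. -/
def IsCantorManifold (X : Type u) [TopologicalSpace X] (n : ℕ) : Prop :=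
  CompactSpace X ∧ MetrizableSpace X ∧ CovDimEq X n ∧
    ∀ L : Set X, IsClosed L → CovDimLEInt (↥L) ((n : ℤ) - 2) → IsConnected (Lᶜ : Set X)

/-- `L` is a partition between `A` and `B`: a closed set whose complement is the union of two
disjoint open sets containing `A` and `B` respectively. -/
def IsPartitionBetween {X : Type u} [TopologicalSpace X] (L A B : Set X) : Prop :=
  IsClosed L ∧ ∃ U V : Set X, IsOpen U ∧ IsOpen V ∧ A ⊆ U ∧ B ⊆ V ∧ Disjoint U V ∧
    Lᶜ = U ∪ V

/-- A strongly infinite-dimensional space. -/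
def StronglyInfiniteDimensional (X : Type u) [TopologicalSpace X] : Prop :=
  ∃ A B : ℕ → Set X,
    (∀ i, IsClosed (A i) ∧ IsClosed (B i) ∧ Disjoint (A i) (B i)) ∧
    ∀ L : ℕ → Set X, (∀ i, IsPartitionBetween (L i) (A i) (B i)) → (⋂ i, L i).Nonempty

/-- A hereditarily strongly infinite-dimensional space: every subspace is either of covering
dimension `≤ 0` or strongly infinite-dimensional. -/
def HereditarilyStronglyInfiniteDimensional (X : Type u) [TopologicalSpace X] : Prop :=
  ∀ S : Set X, CovDimLE (↥S) 0 ∨ StronglyInfiniteDimensional (↥S)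

/-- An infinite-dimensional Cantor manifold: an infinite-dimensional continuum such that every
closed subset disconnecting it is infinite-dimensional. -/
def IsInfiniteDimensionalCantorManifold (X : Type u) [TopologicalSpace X] : Prop :=
  IsContinuum X ∧ InfiniteDimensional X ∧
    ∀ L : Set X, IsClosed L → ¬ IsConnected (Lᶜ : Set X) → InfiniteDimensional (↥L)

/-- A hereditarily strongly infinite-dimensional Cantor manifold. -/
def IsHSIDCantorManifold (X : Type u) [TopologicalSpace X] : Prop :=
  IsInfiniteDimensionalCantorManifold X ∧ HereditarilyStronglyInfiniteDimensional X

/-- A terminal subcontinuum: a subcontinuum `Y` such that every subcontinuum meeting both `Y`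
and its complement contains `Y`. -/
def IsTerminalSubcontinuum {X : Type u} [TopologicalSpace X] (Y : Set X) : Prop :=
  IsSubcontinuum Y ∧
    ∀ Z : Set X, IsSubcontinuum Z → (Z ∩ Y).Nonempty → (Z \ Y).Nonempty → Y ⊆ Z

/-- An atomic map: a continuous map all of whose fibers are terminal subcontinua. -/
def IsAtomicMap {M : Type u} {X : Type v} [TopologicalSpace M] [TopologicalSpace X]
    (p : M → X) : Prop :=
  Continuous p ∧ ∀ x : X, IsTerminalSubcontinuum (p ⁻¹' ({x} : Set X))

/-- A strongly chaotic space: for any two disjoint subsets `U`, `V` with `U` nonempty open,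
there is no homeomorphism of `U` onto `V`. -/
def StronglyChaotic (X : Type u) [TopologicalSpace X] : Prop :=
  ∀ U V : Set X, Disjoint U V → U.Nonempty → IsOpen U → IsEmpty (↥U ≃ₜ ↥V)

/-- `Y` embeds in `Z`: there is a homeomorphism of `Y` onto a subspace of `Z`. -/
def EmbedsIn (Y : Type u) (Z : Type v) [TopologicalSpace Y] [TopologicalSpace Z] : Prop :=
  ∃ f : Y → Z, Topology.IsEmbedding f

/-- `p : M → X` exhibits `M` as a pseudosuspension of `A` over `X` at `a`: `M` is a continuum,
`p` is an atomic surjection, `p ⁻¹ (a)` is homeomorphic to `A`, and `p` restricted to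
`p ⁻¹ (X ∖ {a})` is a homeomorphism onto `X ∖ {a}`. -/
def IsPseudosuspension {X : Type u} {M : Type v} [TopologicalSpace X] [TopologicalSpace M]
    (A : Type w) [TopologicalSpace A] (a : X) (p : M → X) : Prop :=
  IsContinuum M ∧ Function.Surjective p ∧ IsAtomicMap p ∧
    Nonempty (↥(p ⁻¹' ({a} : Set X)) ≃ₜ A) ∧
    IsHomeomorph (Set.restrictPreimage ({a}ᶜ : Set X) p)

/-- A weakly confluent map: every subcontinuum of the codomain is the image of some
subcontinuum of the domain. -/
def WeaklyConfluent {X : Type u} {Y : Type v} [TopologicalSpace X] [TopologicalSpace Y]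
    (f : X → Y) : Prop :=
  ∀ B : Set Y, IsSubcontinuum B → ∃ A : Set X, IsSubcontinuum A ∧ f '' A = B

/-- `W` is a compactification of the ray with ray part `L`: `W` is compact metrizable and `L`
is a dense open subset homeomorphic to the half-line `[0, ∞)`. -/
def IsRayCompactification (W : Type u) [TopologicalSpace W] (L : Set W) : Prop :=
  CompactSpace W ∧ MetrizableSpace W ∧ IsOpen L ∧ Dense L ∧
    Nonempty (↥L ≃ₜ ↥(Set.Ici (0 : ℝ)))

/-- A countable-dimensional space: the union of countably many finite-dimensional subspaces. -/
def CountableDimensional (X : Type u) [TopologicalSpace X] : Prop :=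
  ∃ S : ℕ → Set X, (⋃ i, S i) = Set.univ ∧ ∀ i, ∃ n : ℕ, CovDimLE (↥(S i)) n

/-- Small transfinite inductive dimension `ind X ≤ α`. -/
def IndLE (α : Ordinal.{u}) (X : Type u) [TopologicalSpace X] : Prop :=
  ∀ (x : X) (V : Set X), IsOpen V → x ∈ V →
    ∃ U : Set X, IsOpen U ∧ x ∈ U ∧ U ⊆ V ∧
      ∃ β : Ordinal.{u}, ∃ _ : β < α, IndLE β (↥(frontier U))
termination_by α

/-- Small transfinite inductive dimension `ind X = α`. -/
def IndEq (α : Ordinal.{u}) (X : Type u) [TopologicalSpace X] : Prop :=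
  IndLE α X ∧ ∀ β : Ordinal.{u}, β < α → ¬ IndLE β X

/-- A bundled topological space. -/
structure TopSpace : Type 1 where
  carrier : Type
  [topology : TopologicalSpace carrier]

attribute [instance] TopSpace.topology

instance : CoeSort TopSpace Type := ⟨TopSpace.carrier⟩

/-! ### The combinatorial lemma on cubical grids -/

/-- Coboundary, with coefficients in `ℤ/2`, of a cochain `c` on ordered tuples (encoded as lists):
`cobd σ c` is the value of `c` on the sum of all the faces of `σ`. The empty list is a face of
every one-element list. -/
def cobd {P : Type} : List P → (List P → ZMod 2) → ZMod 2
  | [], _ => 0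
  | p :: σ, c => c σ + cobd σ (fun τ => c (p :: τ))

/-- Prism operator between two maps `lo` and `hi`: `prism lo hi σ c` is the value of `c` on the
sum of the tuples `(lo p₀, …, lo pₖ, hi pₖ, …, hi pₙ)` triangulating the prism over `σ`. -/
def prism {P : Type} (lo hi : P → P) : List P → (List P → ZMod 2) → ZMod 2
  | [], _ => 0
  | p :: σ, c => c (lo p :: hi p :: σ.map hi) + prism lo hi σ (fun τ => c (lo p :: τ))

lemma cobd_add {P : Type} (σ : List P) (c d : List P → ZMod 2) :
    cobd σ (fun τ => c τ + d τ) = cobd σ c + cobd σ d := by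
  induction σ generalizing c d with
  | nil => simp [cobd]
  | cons p σ ih => simp only [cobd, ih]; ring

lemma prism_add {P : Type} (lo hi : P → P) (σ : List P) (c d : List P → ZMod 2) :
    prism lo hi σ (fun τ => c τ + d τ) = prism lo hi σ c + prism lo hi σ d := by
  induction σ generalizing c d with
  | nil => simp [prism]
  | cons p σ ih => simp only [prism, ih]; ring

lemma cobd_zero {P : Type} (σ : List P) : cobd σ (fun _ => 0) = 0 := by
  induction σ with
  | nil => simp [cobd]
  | cons p σ ih => simp only [cobd, ih, add_zero]

lemma cobd_mul {P : Type} (σ : List P) (a : ZMod 2) (c : List P → ZMod 2) :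
    cobd σ (fun τ => a * c τ) = a * cobd σ c := by
  induction σ generalizing c with
  | nil => simp [cobd]
  | cons p σ ih => simp only [cobd, ih]; ring

lemma cobd_sum {P : Type} {ι : Type} (s : Finset ι) (σ : List P) (c : ι → List P → ZMod 2) :
    cobd σ (fun τ => ∑ t ∈ s, c t τ) = ∑ t ∈ s, cobd σ (c t) := by
  induction σ generalizing c with
  | nil => simp [cobd]
  | cons p σ ih => simp only [cobd, ih, Finset.sum_add_distrib]

lemma cobd_map {P Q : Type} (h : P → Q) (σ : List P) (c : List Q → ZMod 2) :
    cobd (σ.map h) c = cobd σ (fun τ => c (τ.map h)) := by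
  induction σ generalizing c with
  | nil => simp [cobd]
  | cons p σ ih => simp only [cobd, ih, List.map_cons]

lemma cobd_cobd {P : Type} (σ : List P) (c : List P → ZMod 2) :
    cobd σ (fun τ => cobd τ c) = 0 := by
  induction σ generalizing c with
  | nil => simp [cobd]
  | cons p σ ih => simp only [cobd, cobd_add, ih, add_zero, CharTwo.add_self_eq_zero]

/-- The boundary of the prism over `σ` consists of its top, its bottom and the prism over the
boundary of `σ`. -/
lemma prism_cobd {P : Type} (lo hi : P → P) (σ : List P) (c : List P → ZMod 2) :
    prism lo hi σ (fun τ => cobd τ c) =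
      c (σ.map hi) + c (σ.map lo) + cobd σ (fun τ => prism lo hi τ c) := by
  induction σ generalizing c with
  | nil => simp [cobd, prism, CharTwo.add_self_eq_zero]
  | cons p σ ih =>
    simp only [cobd, prism, List.map_cons, cobd_add, prism_add, cobd_map, ih]
    linear_combination CharTwo.add_self_eq_zero (c (lo p :: σ.map hi))

lemma prism_eq_zero {P : Type} (lo hi : P → P) (σ : List P) (c : List P → ZMod 2)
    (h : ∀ τ : List P, (∀ q ∈ τ, ∃ p ∈ σ, q = lo p ∨ q = hi p) → c τ = 0) :
    prism lo hi σ c = 0 := by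
  induction σ generalizing c with
  | nil => simp [prism]
  | cons p σ ih =>
    simp only [prism]
    rw [h, ih, add_zero]
    · intro τ hτ
      apply h
      intro q hq
      rcases List.mem_cons.1 hq with rfl | hq
      · exact ⟨p, by simp, Or.inl rfl⟩
      · obtain ⟨r, hr, hr'⟩ := hτ q hq
        exact ⟨r, by simp [hr], hr'⟩
    · intro q hq
      simp only [List.mem_cons, List.mem_map] at hq
      rcases hq with rfl | rfl | ⟨r, hr, rfl⟩
      · exact ⟨p, by simp, Or.inl rfl⟩
      · exact ⟨p, by simp, Or.inr rfl⟩
      · exact ⟨r, by simp [hr], Or.inr rfl⟩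

/-- `gam m n c` is the value of the cochain `c` on the fundamental chain mod 2 of the cube
`{0, …, m}ⁿ`, obtained by iterating prisms over the unit steps of each coordinate. Grid points are
encoded as functions `ℕ → ℕ` whose coordinates of index `≥ n` vanish. -/
def gam (m : ℕ) : ℕ → (List (ℕ → ℕ) → ZMod 2) → ZMod 2
  | 0, c => c [fun _ => 0]
  | n + 1, c => gam m n (fun σ => ∑ t ∈ Finset.range m,
      prism (fun p => Function.update p n t) (fun p => Function.update p n (t + 1)) σ c)

lemma gam_add (m n : ℕ) (c d : List (ℕ → ℕ) → ZMod 2) :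
    gam m n (fun σ => c σ + d σ) = gam m n c + gam m n d := by
  induction n generalizing c d with
  | zero => simp [gam]
  | succ n ih => simp only [gam, prism_add, Finset.sum_add_distrib, ih]

lemma gam_zero (m n : ℕ) : gam m n (fun _ => 0) = 0 := by
  have := gam_add m n (fun _ => 0) (fun _ => 0)
  simpa using this

/-- The side faces of the prism: what remains of `gam m (n+1)` on a coboundary besides the top and
the bottom. -/
def side (m n : ℕ) (c : List (ℕ → ℕ) → ZMod 2) (σ : List (ℕ → ℕ)) : ZMod 2 :=
  ∑ t ∈ Finset.range m,
    prism (fun p => Function.update p n t) (fun p => Function.update p n (t + 1)) σ c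

lemma gam_succ_cobd (m n : ℕ) (c : List (ℕ → ℕ) → ZMod 2) :
    gam m (n + 1) (fun σ => cobd σ c) =
      gam m n (fun σ => c (σ.map fun p => Function.update p n m)) +
      gam m n (fun σ => c (σ.map fun p => Function.update p n 0)) +
      gam m n (fun σ => cobd σ (side m n c)) := by
  rw [← gam_add, ← gam_add]
  simp only [gam]
  congr 1
  funext σ
  simp only [prism_cobd, Finset.sum_add_distrib]
  have hs : cobd σ (side m n c) = ∑ t ∈ Finset.range m, cobd σ (fun τ =>
      prism (fun p => Function.update p n t) (fun p => Function.update p n (t + 1)) τ c) := by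
    rw [← cobd_sum]; rfl
  rw [hs, ← Finset.sum_add_distrib]
  congr 1
  have := Finset.sum_range_sub (fun t => c (σ.map fun p => Function.update p n t)) m
  simpa only [CharTwo.sub_eq_add] using this

lemma gam_bdry (m n : ℕ) (c : List (ℕ → ℕ) → ZMod 2) (h0 : c [] = 0)
    (h : ∀ σ, ∀ j < n, ∀ v, v = 0 ∨ v = m → (∀ p ∈ σ, p j = v) → c σ = 0) :
    gam m n (fun σ => cobd σ c) = 0 := by
  induction n generalizing c with
  | zero => simp [gam, cobd, h0]
  | succ n ih =>
    rw [gam_succ_cobd, ih]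
    · have h1 : ∀ v, v = 0 ∨ v = m →
          gam m n (fun σ => c (σ.map fun p => Function.update p n v)) = 0 := by
        intro v hv
        rw [← gam_zero m n]
        congr 1
        funext σ
        apply h _ n (Nat.lt_succ_self n) v hv
        intro p hp
        obtain ⟨q, -, rfl⟩ := List.mem_map.1 hp
        simp
      rw [h1 m (Or.inr rfl), h1 0 (Or.inl rfl)]
      simp
    · simp [side, prism]
    · intro σ j hj v hv hσ
      apply Finset.sum_eq_zero
      intro t _
      apply prism_eq_zero
      intro τ hτ
      apply h τ j (by omega) v hv
      intro q hq
      obtain ⟨p, hp, rfl | rfl⟩ := hτ q hq <;>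
        rw [Function.update_of_ne (by omega)] <;> exact hσ p hp

/-- The fundamental chain of the grid is supported on tuples contained in unit cubes. -/
lemma gam_eq_zero (m n : ℕ) (c : List (ℕ → ℕ) → ZMod 2)
    (h : ∀ σ, (∃ v : ℕ → ℕ, ∀ p ∈ σ, ∀ j, v j ≤ p j ∧ p j ≤ v j + 1) → c σ = 0) :
    gam m n c = 0 := by
  induction n generalizing c with
  | zero => exact h _ ⟨fun _ => 0, by simp⟩
  | succ n ih =>
    apply ih
    rintro σ ⟨v, hv⟩
    apply Finset.sum_eq_zero
    intro t _
    apply prism_eq_zero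
    intro τ hτ
    refine h τ ⟨Function.update v n t, fun q hq j => ?_⟩
    obtain ⟨p, hp, rfl | rfl⟩ := hτ q hq <;> by_cases hj : j = n
    · subst hj; simp
    · simpa [Function.update_of_ne hj] using hv p hp j
    · subst hj; simp
    · simpa [Function.update_of_ne hj] using hv p hp j

/-- The cup product of a function (a `0`-cochain) with a cochain. -/
def cup {P : Type} (f : P → ZMod 2) (b : List P → ZMod 2) : List P → ZMod 2
  | [] => 0
  | p :: σ => f p * b (p :: σ)

/-- `bet s n` is the cup product of the coboundaries of `s (n-1)`, …, `s 0`. -/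
def bet {P : Type} (s : ℕ → P → ZMod 2) : ℕ → List P → ZMod 2
  | 0, σ => if σ.length = 1 then 1 else 0
  | n + 1, σ => cobd σ (cup (s n) (bet s n))

lemma bet_nil {P : Type} (s : ℕ → P → ZMod 2) (n : ℕ) : bet s n [] = 0 := by
  cases n <;> simp [bet, cobd]

lemma cobd_bet {P : Type} (s : ℕ → P → ZMod 2) (n : ℕ) (σ : List P) :
    cobd σ (bet s n) = 0 := by
  cases n with
  | succ n => exact cobd_cobd _ _
  | zero =>
    match σ with
    | [] => simp [cobd]
    | [p] => simp [cobd, bet]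
    | [p, q] => simp [cobd, bet, CharTwo.add_self_eq_zero]
    | p :: q :: r :: σ => simp [cobd, bet, cobd_zero]

lemma bet_succ {P : Type} (s : ℕ → P → ZMod 2) (n : ℕ) (p q : P) (σ : List P) :
    bet s (n + 1) (p :: q :: σ) = (s n p + s n q) * bet s n (q :: σ) := by
  have h := cobd_bet s n (p :: q :: σ)
  have h1 : ∀ τ, cup (s n) (bet s n) (p :: τ) = s n p * bet s n (p :: τ) := fun τ => rfl
  have h2 : cup (s n) (bet s n) (q :: σ) = s n q * bet s n (q :: σ) := rfl
  rw [cobd] at h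
  change cobd (p :: q :: σ) (cup (s n) (bet s n)) = _
  rw [cobd, h2]
  simp only [h1, cobd_mul]
  linear_combination (s n p) * h - CharTwo.add_self_eq_zero (s n p * bet s n (q :: σ)) +
    CharTwo.add_self_eq_zero (0 : ZMod 2)

lemma bet_single {P : Type} (s : ℕ → P → ZMod 2) (n : ℕ) (p : P) :
    bet s (n + 1) [p] = 0 := by
  simp [bet, cobd, cup]

lemma bet_map {P Q : Type} (h : P → Q) (s : ℕ → Q → ZMod 2) (n : ℕ) (σ : List P) :
    bet s n (σ.map h) = bet (fun i p => s i (h p)) n σ := by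
  induction n generalizing σ with
  | zero => simp [bet]
  | succ n ih =>
    match σ with
    | [] => simp [bet_nil]
    | [p] => simp [bet_single]
    | p :: q :: σ =>
      have := ih (q :: σ)
      simp only [List.map_cons] at this ⊢
      rw [bet_succ, bet_succ, this]

lemma bet_eq_zero {P : Type} (s : ℕ → P → ZMod 2) (n : ℕ) (σ : List P) (j : ℕ) (hj : j < n)
    (h : ∀ p ∈ σ, ∀ q ∈ σ, s j p = s j q) : bet s n σ = 0 := by
  induction n generalizing σ with
  | zero => omega
  | succ n ih =>
    match σ with
    | [] => simp [bet_nil]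
    | [p] => simp [bet_single]
    | p :: q :: σ =>
      rw [bet_succ]
      rcases Nat.lt_succ_iff_lt_or_eq.1 hj with hj | rfl
      · rw [ih (q :: σ) hj, mul_zero]
        intro a ha b hb
        exact h a (List.mem_cons_of_mem _ ha) b (List.mem_cons_of_mem _ hb)
      · rw [h p (by simp) q (by simp), CharTwo.add_self_eq_zero, zero_mul]

/-- The cup product of the coboundaries takes the value `1` on the fundamental chain, by
Stokes' formula and induction on the dimension. -/
lemma gam_bet (m n : ℕ) (s : ℕ → (ℕ → ℕ) → ZMod 2)
    (h0 : ∀ i < n, ∀ p, p i = 0 → s i p = 0) (h1 : ∀ i < n, ∀ p, p i = m → s i p = 1) :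
    gam m n (bet s n) = 1 := by
  induction n generalizing s with
  | zero => simp [gam, bet]
  | succ n ih =>
    have e : gam m (n + 1) (bet s (n + 1)) =
      gam m (n + 1) (fun σ => cobd σ (cup (s n) (bet s n))) := rfl
    rw [e, gam_succ_cobd]
    have e1 : (fun σ : List (ℕ → ℕ) =>
        cup (s n) (bet s n) (σ.map fun p => Function.update p n m)) =
        bet (fun i p => s i (Function.update p n m)) n := by
      funext σ
      rw [← bet_map]
      cases σ with
      | nil => simp [cup, bet_nil]
      | cons p σ => simp [cup, h1 n (Nat.lt_succ_self n)]
    have e2 : (fun σ : List (ℕ → ℕ) =>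
        cup (s n) (bet s n) (σ.map fun p => Function.update p n 0)) = fun _ => 0 := by
      funext σ
      cases σ with
      | nil => simp [cup]
      | cons p σ => simp [cup, h0 n (Nat.lt_succ_self n)]
    rw [e1, e2, gam_zero, ih, gam_bdry]
    · simp
    · simp [side, prism]
    · intro σ j hj v hv hσ
      apply Finset.sum_eq_zero
      intro t _
      apply prism_eq_zero
      intro τ hτ
      have hτ' : ∀ q ∈ τ, q j = v := by
        intro q hq
        obtain ⟨p, hp, rfl | rfl⟩ := hτ q hq <;>
          rw [Function.update_of_ne (by omega)] <;> exact hσ p hp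
      have hb : bet s n τ = 0 := by
        apply bet_eq_zero s n τ j hj
        intro p hp q hq
        rcases hv with rfl | rfl
        · rw [h0 j (by omega) p (hτ' p hp), h0 j (by omega) q (hτ' q hq)]
        · rw [h1 j (by omega) p (hτ' p hp), h1 j (by omega) q (hτ' q hq)]
      cases τ with
      | nil => rfl
      | cons p τ => simp [cup, hb]
    · intro i hi p hp
      apply h0 i (by omega)
      rw [Function.update_of_ne (by omega), hp]
    · intro i hi p hp
      apply h1 i (by omega)
      rw [Function.update_of_ne (by omega), hp]

/-- Discrete Poincaré–Miranda theorem: if the `0`-`1` function `s i` separates the two faces of the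
grid in direction `i`, for each `i < n`, then in some unit cube none of these functions is
constant. -/
lemma exists_cube (m n : ℕ) (s : ℕ → (ℕ → ℕ) → ZMod 2)
    (h0 : ∀ i < n, ∀ p, p i = 0 → s i p = 0) (h1 : ∀ i < n, ∀ p, p i = m → s i p = 1) :
    ∃ v : ℕ → ℕ, ∀ i < n, ∃ p q : ℕ → ℕ, (∀ j, v j ≤ p j ∧ p j ≤ v j + 1) ∧
      (∀ j, v j ≤ q j ∧ q j ≤ v j + 1) ∧ s i p ≠ s i q := by
  by_contra! hcon
  have h := gam_eq_zero m n (bet s n) ?_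
  · rw [gam_bet m n s h0 h1] at h
    exact one_ne_zero h
  · rintro σ ⟨v, hv⟩
    obtain ⟨i, hi, hs⟩ := hcon v
    exact bet_eq_zero s n σ i hi fun p hp q hq => hs p q (hv p hp) (hv q hq)
/-! ### Essential families on products of continua -/

/-- The disjoint open sets `O false` and `O true` contain `{f ≤ 0}` and `{1 ≤ f}` respectively; the
complement of their union is a partition between these two sets. -/
structure SepBy {M : Type} [TopologicalSpace M] (f : M → ℝ) (O : Bool → Set M) : Prop where
  isOpen : ∀ b, IsOpen (O b)
  disj : Disjoint (O false) (O true)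
  lo : ∀ x, f x ≤ 0 → x ∈ O false
  hi : ∀ x, 1 ≤ f x → x ∈ O true

/-- The pairs `({f j ≤ 0}, {1 ≤ f j})` form an essential family: any choice of partitions has a
common point. -/
def EssFam {J M : Type} [TopologicalSpace M] (f : J → M → ℝ) : Prop :=
  ∀ O : J → Bool → Set M, (∀ j, SepBy (f j) (O j)) → ∃ x, ∀ j b, x ∉ O j b

lemma exists_eps_chain {X : Type} [MetricSpace X] [PreconnectedSpace X] {δ : ℝ} (hδ : 0 < δ)
    (a b : X) : ∃ (m : ℕ) (w : ℕ → X), w 0 = a ∧ w m = b ∧ ∀ k, dist (w k) (w (k + 1)) < δ := by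
  have hsym₀ : Std.Symm (fun x y : X => dist x y < δ) := ⟨fun x y h => by rwa [dist_comm]⟩
  have hsym : Std.Symm (Relation.ReflTransGen fun x y : X => dist x y < δ) :=
    Relation.ReflTransGen.stdSymm
  have h : Relation.ReflTransGen (fun x y : X => dist x y < δ) a b := by
    apply PreconnectedSpace.induction₂ (Relation.ReflTransGen fun x y : X => dist x y < δ)
    · intro x
      filter_upwards [Metric.ball_mem_nhds x hδ] with y hy
      apply Relation.ReflTransGen.single
      rwa [dist_comm]
    · exact ⟨fun x y z => Relation.ReflTransGen.trans⟩
  induction h with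
  | refl => exact ⟨0, fun _ => a, rfl, rfl, by simpa using hδ⟩
  | @tail b c _ hbc ih =>
    obtain ⟨m, w, h0, hm, hw⟩ := ih
    refine ⟨m + 1, fun k => if k ≤ m then w k else c, by simpa using h0, by simp, fun k => ?_⟩
    rcases lt_trichotomy k m with hk | rfl | hk
    · simpa [hk.le, Nat.succ_le_of_lt hk] using hw k
    · simpa [hm] using hbc
    · simpa [Nat.not_le.2 hk, Nat.not_le.2 (Nat.lt_succ_of_lt hk)] using hδ

/-- In a power of a continuum, the pairs of opposite faces form an essential family. -/
lemma essFam_pi {J X : Type} [MetricSpace X] [CompactSpace X] [PreconnectedSpace X]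
    (g : X → ℝ) (a b : X) (ha : g a = 0) (hb : g b = 1) :
    EssFam (fun (j : J) (x : J → X) => g (x j)) := by
  classical
  intro O hO
  by_contra! hcon
  obtain ⟨F, hF⟩ := isCompact_univ.elim_finite_subcover (fun j => O j false ∪ O j true)
    (fun j => ((hO j).isOpen _).union ((hO j).isOpen _)) (fun x _ => by
      obtain ⟨j, b, h⟩ := hcon x
      refine Set.mem_iUnion.2 ⟨j, ?_⟩
      cases b
      exacts [Or.inl h, Or.inr h])
  -- only finitely many coordinates matter; the others are frozen at `a`
  let n := F.card
  let e : F ≃ Fin n := F.equivFin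
  let ext : (Fin n → X) → (J → X) := fun y j => if h : j ∈ F then y (e ⟨j, h⟩) else a
  have hext : Continuous ext := by
    apply continuous_pi
    intro j
    by_cases h : j ∈ F
    · simpa only [ext, h, dif_pos] using continuous_apply _
    · simpa only [ext, h, dif_neg, not_false_eq_true] using continuous_const
  have hext_e : ∀ y i, ext y (e.symm i) = y i := by
    intro y i
    simp [ext]
  obtain ⟨δ, hδ, hleb⟩ := lebesgue_number_lemma_of_metric
    (c := fun q : Fin n × Bool => ext ⁻¹' O (e.symm q.1) q.2) (isCompact_univ)
    (fun q => ((hO _).isOpen _).preimage hext) (fun y _ => by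
      obtain ⟨j, hj, hy⟩ : ∃ j ∈ F, ext y ∈ O j false ∪ O j true := by
        simpa using hF (Set.mem_univ (ext y))
      rcases hy with hy | hy
      · exact Set.mem_iUnion.2 ⟨(e ⟨j, hj⟩, false), by simpa using hy⟩
      · exact Set.mem_iUnion.2 ⟨(e ⟨j, hj⟩, true), by simpa using hy⟩)
  obtain ⟨m, w, hw0, hwm, hw⟩ := exists_eps_chain hδ a b
  let pt : (ℕ → ℕ) → (Fin n → X) := fun p i => w (p i)
  let s : ℕ → (ℕ → ℕ) → ZMod 2 := fun i p =>
    if h : i < n then (if ext (pt p) ∈ O (e.symm ⟨i, h⟩) false then 0 else 1) else 0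
  obtain ⟨v, hv⟩ := exists_cube m n s
    (by
      intro i hi p hp
      simp only [s, hi, dif_pos]
      rw [if_pos]
      apply (hO _).lo
      beta_reduce
      rw [hext_e]
      simp [pt, hp, hw0, ha])
    (by
      intro i hi p hp
      simp only [s, hi, dif_pos]
      rw [if_neg]
      refine Set.disjoint_right.1 (hO _).disj ((hO _).hi _ ?_)
      beta_reduce
      rw [hext_e]
      simp [pt, hp, hwm, hb])
  obtain ⟨⟨i, c⟩, hi⟩ := hleb (pt v) (Set.mem_univ _)
  have hball : ∀ p : ℕ → ℕ, (∀ j, v j ≤ p j ∧ p j ≤ v j + 1) → ext (pt p) ∈ O (e.symm i) c := by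
    intro p hp
    apply hi
    rw [Metric.mem_ball, dist_comm, dist_pi_lt_iff hδ]
    intro k
    have : p k = v k ∨ p k = v k + 1 := by have := hp k; omega
    rcases this with h | h
    · simpa [pt, h] using hδ
    · simpa [pt, h] using hw (v k)
  obtain ⟨p, q, hp, hq, hpq⟩ := hv i i.2
  apply hpq
  have hp' := hball p hp
  have hq' := hball q hq
  simp only [s, i.2, dif_pos, Fin.eta]
  cases c with
  | false => rw [if_pos hp', if_pos hq']
  | true =>
    rw [if_neg (Set.disjoint_right.1 (hO _).disj hp'),
      if_neg (Set.disjoint_right.1 (hO _).disj hq')]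
/-! ### Special partitions -/

/-- The complement of `foldSep φ ψ false ∪ foldSep φ ψ true` is the preimage under `(φ, ψ)` of an
S-shaped arc that separates `{φ ≤ 0}` from `{1 ≤ φ}`: as `φ` decreases from `3/4` to `1/4`, the arc
climbs from the bottom to `ψ = 9/10`, goes down to `ψ = 1/10` and climbs to the top. -/
def foldSep {M : Type} (φ ψ : M → ℝ) : Bool → Set M
  | false => {x | φ x < 1/4 ∨ (1/2 < φ x ∧ φ x < 3/4 ∧ ψ x < 9/10) ∨ (φ x < 3/4 ∧ ψ x < 1/10)}
  | true => {x | 3/4 < φ x ∨ (1/4 < φ x ∧ φ x < 1/2 ∧ 1/10 < ψ x) ∨ (1/4 < φ x ∧ 9/10 < ψ x)}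

lemma foldSep_sepBy {M : Type} [TopologicalSpace M] {φ ψ : M → ℝ} (hφ : Continuous φ)
    (hψ : Continuous ψ) : SepBy φ (foldSep φ ψ) where
  isOpen b := by
    have h1 : ∀ r, IsOpen {x | φ x < r} := fun r => isOpen_lt hφ continuous_const
    have h2 : ∀ r, IsOpen {x | r < φ x} := fun r => isOpen_lt continuous_const hφ
    have h3 : ∀ r, IsOpen {x | ψ x < r} := fun r => isOpen_lt hψ continuous_const
    have h4 : ∀ r, IsOpen {x | r < ψ x} := fun r => isOpen_lt continuous_const hψ
    cases b
    · exact (h1 _).union (((h2 _).inter ((h1 _).inter (h3 _))).union ((h1 _).inter (h3 _)))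
    · exact (h2 _).union (((h2 _).inter ((h1 _).inter (h4 _))).union ((h2 _).inter (h4 _)))
  disj := by
    rw [Set.disjoint_left]
    intro x hx hx'
    simp only [foldSep, Set.mem_ofPred_eq] at hx hx'
    rcases hx with h | ⟨h1, h2, h3⟩ | ⟨h1, h2⟩ <;>
      rcases hx' with h' | ⟨h1', h2', h3'⟩ | ⟨h1', h2'⟩ <;> linarith
  lo x hx := by
    simp only [foldSep, Set.mem_ofPred_eq]
    left; linarith
  hi x hx := by
    simp only [foldSep, Set.mem_ofPred_eq]
    left; linarith

/-- No two intersecting continua `P`, `Q` in the folded partition can be told apart by `ψ` in the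
sense of the hypotheses: `P` is confined to the first leg of the arc and `Q` to the last one. -/
lemma foldSep_key {M : Type} [TopologicalSpace M] {φ ψ : M → ℝ} (hφ : Continuous φ)
    {P Q : Set M} (hP : IsPreconnected P) (hQ : IsPreconnected Q)
    (hPQ : (P ∩ Q).Nonempty) (hP' : ∀ x ∈ P, ∀ b, x ∉ foldSep φ ψ b)
    (hQ' : ∀ x ∈ Q, ∀ b, x ∉ foldSep φ ψ b) {c d : M} (hc : c ∈ P) (hd : d ∈ Q)
    (hψc : ψ c < 1/10) (hψd : 9/10 < ψ d) (hψP : ∀ x ∈ P, ψ x < 9/10)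
    (hψQ : ∀ x ∈ Q, 1/10 < ψ x) : False := by
  have key : ∀ x, (∀ b, x ∉ foldSep φ ψ b) →
      1/4 ≤ φ x ∧ φ x ≤ 3/4 ∧ (1/2 < φ x → φ x < 3/4 → 9/10 ≤ ψ x) ∧
      (φ x < 3/4 → 1/10 ≤ ψ x) ∧ (1/4 < φ x → φ x < 1/2 → ψ x ≤ 1/10) ∧
      (1/4 < φ x → ψ x ≤ 9/10) := by
    intro x hx
    have h1 := hx false
    have h2 := hx true
    simp only [foldSep, Set.mem_ofPred_eq, not_or, not_and, not_lt] at h1 h2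
    exact ⟨h1.1, h2.1, h1.2.1, h1.2.2, h2.2.1, h2.2.2⟩
  have hP1 : ∀ x ∈ P, 3/4 ≤ φ x := by
    by_contra! hcon
    obtain ⟨y, hy, hy'⟩ := hcon
    obtain ⟨z, hz, hz1, hz2⟩ := isPreconnected_closed_iff.1 hP {x | 3/4 ≤ φ x} {x | φ x ≤ 1/2}
      (isClosed_le continuous_const hφ) (isClosed_le hφ continuous_const)
      (by
        intro x hx
        by_contra hcon
        simp only [Set.mem_union, Set.mem_ofPred_eq, not_or, not_le] at hcon
        have := (key x (hP' x hx)).2.2.1 hcon.2 hcon.1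
        linarith [hψP x hx])
      ⟨c, hc, by
        by_contra hcon
        have := (key c (hP' c hc)).2.2.2.1 (not_le.1 hcon)
        linarith⟩
      ⟨y, hy, by
        by_contra hcon
        have := (key y (hP' y hy)).2.2.1 (not_le.1 hcon) hy'
        linarith [hψP y hy]⟩
    simp only [Set.mem_ofPred_eq] at hz1 hz2
    linarith
  have hQ1 : ∀ x ∈ Q, φ x ≤ 1/4 := by
    by_contra! hcon
    obtain ⟨y, hy, hy'⟩ := hcon
    obtain ⟨z, hz, hz1, hz2⟩ := isPreconnected_closed_iff.1 hQ {x | φ x ≤ 1/4} {x | 1/2 ≤ φ x}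
      (isClosed_le hφ continuous_const) (isClosed_le continuous_const hφ)
      (by
        intro x hx
        by_contra hcon
        simp only [Set.mem_union, Set.mem_ofPred_eq, not_or, not_le] at hcon
        have := (key x (hQ' x hx)).2.2.2.2.1 hcon.1 hcon.2
        linarith [hψQ x hx])
      ⟨d, hd, by
        by_contra hcon
        have := (key d (hQ' d hd)).2.2.2.2.2 (not_le.1 hcon)
        linarith⟩
      ⟨y, hy, by
        by_contra hcon
        have := (key y (hQ' y hy)).2.2.2.2.1 hy' (not_le.1 hcon)
        linarith [hψQ y hy]⟩
    simp only [Set.mem_ofPred_eq] at hz1 hz2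
    linarith
  obtain ⟨x, hx, hx'⟩ := hPQ
  linarith [hP1 x hx, hQ1 x hx']

/-- Given a compact family, indexed by `t ∈ T`, of pairs of disjoint open sets, there is one pair
that contains the `t`-th pair on the level `{ψ = f t}`, for all `t ∈ T` simultaneously. -/
lemma exists_sepBy_of_param {K M : Type} [TopologicalSpace K] [CompactSpace K]
    [TopologicalSpace M] [CompactSpace M] [MetrizableSpace M] {φ ψ : M → ℝ} (hφ : Continuous φ)
    (hψ : Continuous ψ) {f : K → ℝ} (hf : Continuous f) (hfi : Function.Injective f)
    {T : Set K} (hT : IsClosed T) (G : Bool → Set (K × M)) (hG : ∀ b, IsOpen (G b))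
    (hdisj : ∀ t ∈ T, ∀ x, (t, x) ∈ G false → (t, x) ∉ G true)
    (hlo : ∀ t x, φ x ≤ 0 → (t, x) ∈ G false) (hhi : ∀ t x, 1 ≤ φ x → (t, x) ∈ G true) :
    ∃ O, SepBy φ O ∧ ∀ t ∈ T, ∀ x, ψ x = f t → ∀ b, (t, x) ∈ G b → x ∈ O b := by
  let face : Bool → Set M := fun b => if b then {x | 1 ≤ φ x} else {x | φ x ≤ 0}
  have hface : ∀ b, IsClosed (face b) := by
    intro b
    cases b
    exacts [isClosed_le hφ continuous_const, isClosed_le continuous_const hφ]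
  have hfaceG : ∀ b t, ∀ x ∈ face b, (t, x) ∈ G b := by
    intro b t x hx
    cases b
    exacts [hlo t x (by simpa [face] using hx), hhi t x (by simpa [face] using hx)]
  have hfd : ∀ b, ∀ x ∈ face b, x ∉ face !b := by
    intro b x h1 h2
    cases b <;> simp [face] at h1 h2 <;> linarith
  have hd : ∀ b, ∀ t ∈ T, ∀ x, (t, x) ∈ G b → (t, x) ∉ G !b := by
    intro b t ht x h1 h2
    cases b
    exacts [hdisj t ht x h1 h2, hdisj t ht x h2 h1]
  let S : Bool → Set M := fun b => face b ∪ {x | ∃ t ∈ T, ψ x = f t ∧ (t, x) ∈ G b}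
  -- a closed set containing the second part of `S b` and missing `S !b`
  let Z : Bool → Set M := fun b => Prod.snd '' {q : K × M | q.1 ∈ T ∧ ψ q.2 = f q.1 ∧ q ∉ G !b}
  have hZ : ∀ b, IsClosed (Z b) := by
    intro b
    apply IsCompact.isClosed
    apply IsCompact.image _ continuous_snd
    apply IsClosed.isCompact
    exact (hT.preimage continuous_fst).inter
      ((isClosed_eq (hψ.comp continuous_snd) (hf.comp continuous_fst)).inter
        (hG _).isClosed_compl)
  have hcl : ∀ b, closure (S b) ⊆ face b ∪ Z b := by
    intro b
    apply closure_minimal _ ((hface b).union (hZ b))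
    apply Set.union_subset_union_right
    rintro x ⟨t, ht, hx, hG⟩
    exact ⟨(t, x), ⟨ht, hx, hd b t ht x hG⟩, rfl⟩
  have hdis : ∀ b, Disjoint (closure (S b)) (S !b) := by
    intro b
    rw [Set.disjoint_left]
    intro x hx hx'
    rcases hcl b hx with h | ⟨⟨t, y⟩, ⟨ht, hy, hyG⟩, rfl⟩ <;>
      rcases hx' with h' | ⟨t', ht', hx', hG'⟩
    · exact hfd b x h h'
    · exact hd b t' ht' x (hfaceG b t' x h) hG'
    · exact hyG (hfaceG _ t _ h')
    · obtain rfl : t = t' := hfi (hy.symm.trans hx')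
      exact hyG hG'
  obtain ⟨U, V, hU, hV, hSU, hSV, hUV⟩ := separatedNhds_iff_disjoint.2
    (CompletelyNormalSpace.completely_normal (hdis false) (hdis true).symm)
  refine ⟨fun b => if b then V else U, ⟨?_, ?_, ?_, ?_⟩, ?_⟩
  · intro b
    cases b
    exacts [hU, hV]
  · exact hUV
  · exact fun x hx => hSU (Or.inl hx)
  · exact fun x hx => hSV (Or.inl hx)
  · intro t ht x hx b hb
    cases b
    exacts [hSU (Or.inr ⟨t, ht, hx, hb⟩), hSV (Or.inr ⟨t, ht, hx, hb⟩)]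

/-- There are partitions, one for each `φ i`, that are universal in the following sense: every
sequence `G` of partitions occurs on some level `{ψ = r}`. The sequences of partitions are coded by
the points of a closed subset of the Cantor set, which is embedded in `[1/4, 3/4]`. -/
lemma exists_universal_sep {M : Type} [TopologicalSpace M] [CompactSpace M] [MetrizableSpace M]
    {φ : ℕ → M → ℝ} {ψ : M → ℝ} (hφ : ∀ i, Continuous (φ i)) (hψ : Continuous ψ) :
    ∃ O : ℕ → Bool → Set M, (∀ i, SepBy (φ i) (O i)) ∧
      ∀ G : ℕ → Bool → Set M, (∀ i b, IsOpen (G i b)) →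
        (∀ i x, (x ∈ G i false ∨ φ i x < 1/3) → ¬ (x ∈ G i true ∨ 2/3 < φ i x)) →
        ∃ r ∈ Set.Icc (1/4 : ℝ) (3/4), ∀ x, ψ x = r → ∀ i b, x ∈ G i b → x ∈ O i b := by
  obtain ⟨f, hfr, hf, hfi⟩ := Perfect.exists_nat_bool_injection (C := Set.Icc (1/4 : ℝ) (3/4))
    ⟨isClosed_Icc, isPreconnected_Icc.preperfect_of_nontrivial
      ⟨1/4, by norm_num, 3/4, by norm_num, by norm_num⟩⟩ ⟨1/2, by norm_num⟩
  obtain ⟨B, hBc, -, hB⟩ := TopologicalSpace.exists_countable_basis M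
  have : Countable B := hBc.to_subtype
  -- the bit of the code `t` telling whether the basic set `s` is used in the set of index `(i, b)`
  let bit : (ℕ → Bool) → ℕ → Bool → B → Bool := fun t i b s =>
    t ((Countable.exists_injective_nat (ℕ × Bool × B)).choose (i, b, s))
  let D : (ℕ → Bool) → ℕ → Bool → Set M := fun t i b => ⋃ s : {s : B // bit t i b s = true}, s.1
  let base : ℕ → Bool → Set M := fun i b => if b then {x | 2/3 < φ i x} else {x | φ i x < 1/3}
  have hbase : ∀ i b, IsOpen (base i b) := by
    intro i b
    cases b
    exacts [isOpen_lt (hφ i) continuous_const, isOpen_lt continuous_const (hφ i)]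
  let W : ℕ → Bool → Set ((ℕ → Bool) × M) := fun i b => {q | q.2 ∈ D q.1 i b ∪ base i b}
  have hbit : ∀ i b s, Continuous fun t => bit t i b s := fun i b s => continuous_apply _
  have hDo : ∀ i b, IsOpen {q : (ℕ → Bool) × M | q.2 ∈ D q.1 i b} := by
    intro i b
    have e : {q : (ℕ → Bool) × M | q.2 ∈ D q.1 i b} =
        ⋃ s : B, {t | bit t i b s = true} ×ˢ (s : Set M) := by
      ext ⟨t, x⟩
      simp [D]
    rw [e]
    refine isOpen_iUnion fun s => IsOpen.prod ?_ (hB.isOpen s.2)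
    exact (isOpen_discrete {true}).preimage (hbit i b s)
  have hW : ∀ i b, IsOpen (W i b) := fun i b =>
    (hDo i b).union ((hbase i b).preimage continuous_snd)
  let T : Set (ℕ → Bool) := {t | ∀ i x, (t, x) ∈ W i false → (t, x) ∉ W i true}
  have hT : IsClosed T := by
    have e : T = ⋂ i, ⋂ x, (fun t => (t, x)) ⁻¹' (W i false ∩ W i true)ᶜ := by
      ext t
      simp [T]
    rw [e]
    exact isClosed_iInter fun i => isClosed_iInter fun x =>
      ((hW i false).inter (hW i true)).isClosed_compl.preimage (by fun_prop)
  have hex := fun i => exists_sepBy_of_param (hφ i) hψ hf hfi hT (W i) (hW i)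
    (fun t ht x => ht i x)
    (fun t x hx => Or.inr (by simp only [base]; change φ i x < 1/3; linarith))
    (fun t x hx => Or.inr (by simp only [base]; change 2/3 < φ i x; linarith))
  choose O hO hOT using hex
  refine ⟨O, hO, fun G hG hdis => ?_⟩
  let ι := (Countable.exists_injective_nat (ℕ × Bool × B)).choose
  have hι : Function.Injective ι := (Countable.exists_injective_nat (ℕ × Bool × B)).choose_spec
  classical
  let t : ℕ → Bool := fun n => decide (∃ i b, ∃ s : B, n = ι (i, b, s) ∧ (s : Set M) ⊆ G i b)
  have htbit : ∀ i b s, bit t i b s = true ↔ (s : Set M) ⊆ G i b := by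
    intro i b s
    simp only [bit, t, decide_eq_true_eq]
    constructor
    · rintro ⟨i', b', s', h, hs⟩
      have := hι h
      simp only [Prod.mk.injEq] at this
      obtain ⟨rfl, rfl, rfl⟩ := this
      exact hs
    · exact fun h => ⟨i, b, s, rfl, h⟩
  have htD : ∀ i b, D t i b = G i b := by
    intro i b
    apply subset_antisymm
    · intro x hx
      obtain ⟨⟨s, hs⟩, hx⟩ := Set.mem_iUnion.1 hx
      exact (htbit i b s).1 hs hx
    · intro x hx
      obtain ⟨s, hs, hxs, hsG⟩ := hB.exists_subset_of_mem_open hx (hG i b)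
      exact Set.mem_iUnion.2 ⟨⟨⟨s, hs⟩, (htbit i b ⟨s, hs⟩).2 hsG⟩, hxs⟩
  have htT : t ∈ T := by
    intro i x h1 h2
    simp only [W, Set.mem_ofPred_eq, htD] at h1 h2
    exact hdis i x h1 h2
  refine ⟨f t, hfr ⟨t, rfl⟩, fun x hx i b hxG => hOT i t htT x hx b (Or.inl ?_)⟩
  rwa [← htD] at hxG
/-! ### Gluing inessential families along zero-dimensional sets -/

/-- The opposite of a colour `(i, b)`. -/
def bar (c : Fin 3 × Bool) : Fin 3 × Bool := (c.1, !c.2)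

@[simp] lemma bar_bar (c : Fin 3 × Bool) : bar (bar c) = c := by simp [bar]

/-- A closed cover `a` of `F`, indexed by the six colours, such that opposite members are disjoint
and each face `A c` is contained, within `F`, in the member of colour `c`. It exists for closed `F`
precisely if there are partitions between the three pairs of opposite faces with no common point
in `F`. -/
structure Colored {M : Type} [TopologicalSpace M] (A : Fin 3 × Bool → Set M) (F : Set M)
    (a : Fin 3 × Bool → Set M) : Prop where
  closed : ∀ c, IsClosed (a c)
  sub : ∀ c, a c ⊆ F
  disj : ∀ c, ∀ x ∈ a c, x ∉ a (bar c)
  face : ∀ c, ∀ x ∈ F, x ∈ A c → x ∈ a c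
  cover : ∀ x ∈ F, ∃ c, x ∈ a c

/-- A colouring can be modified near finitely many disjoint closed sets `Z j` so as to use there
only the colours of a given set `σ j` compatible with the old colouring. -/
lemma Colored.recolor {M : Type} [TopologicalSpace M] [NormalSpace M]
    {A : Fin 3 × Bool → Set M} (hA : ∀ c, IsClosed (A c)) {F : Set M} (hF : IsClosed F)
    {a : Fin 3 × Bool → Set M} (ha : Colored A F a) {κ : Type} [Finite κ] {Z : κ → Set M}
    (hZ : ∀ j, IsClosed (Z j)) (hZd : Pairwise (Function.onFun Disjoint Z))
    {σ : κ → Set (Fin 3 × Bool)} (hne : ∀ j, (σ j).Nonempty)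
    (hσ : ∀ j, ∀ c ∈ σ j, bar c ∉ σ j) (hcomp : ∀ j, ∀ x ∈ Z j, ∀ c, x ∈ a c → bar c ∉ σ j)
    (hface : ∀ j, ∀ x ∈ Z j, ∀ c, x ∈ A c → c ∈ σ j) :
    ∃ a', Colored A F a' ∧ ∀ j, ∀ x ∈ Z j, ∀ c, x ∈ a' c → c ∈ σ j := by
  obtain ⟨s, hs, hsd⟩ := Pairwise.exists_mem_filter_of_disjoint (l := fun j => 𝓝ˢ (Z j))
    (fun i j hij => separatedNhds_iff_disjoint.1
      (NormalSpace.normal _ _ (hZ i) (hZ j) (hZd hij)))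
  have hV : ∀ j, ∃ V, IsOpen V ∧ Z j ⊆ V ∧ closure V ⊆ s j ∧
      (∀ c, bar c ∈ σ j → ∀ x ∈ closure V, x ∉ a c) ∧
      (∀ c, c ∉ σ j → ∀ x ∈ closure V, x ∉ A c) := by
    intro j
    let O : Set M := interior (s j) ∩ ((⋂ c : {c // bar c ∈ σ j}, (a c)ᶜ) ∩
      ⋂ c : {c // c ∉ σ j}, (A c)ᶜ)
    have hO : IsOpen O := isOpen_interior.inter
      ((isOpen_iInter_of_finite fun c : {c // bar c ∈ σ j} => (ha.closed c).isOpen_compl).inter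
        (isOpen_iInter_of_finite fun c : {c // c ∉ σ j} => (hA c).isOpen_compl))
    have hZO : Z j ⊆ O := by
      refine Set.subset_inter (subset_interior_iff_mem_nhdsSet.2 (hs j)) (Set.subset_inter ?_ ?_)
      · refine Set.subset_iInter fun c x hx hxc => hcomp j x hx c hxc c.2
      · refine Set.subset_iInter fun c x hx hxc => c.2 (hface j x hx c hxc)
    obtain ⟨V, hV, hZV, hVO⟩ := normal_exists_closure_subset (hZ j) hO hZO
    refine ⟨V, hV, hZV, fun x hx => interior_subset (hVO hx).1, fun c hc x hx => ?_,
      fun c hc x hx => ?_⟩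
    · exact Set.mem_iInter.1 (hVO hx).2.1 ⟨c, hc⟩
    · exact Set.mem_iInter.1 (hVO hx).2.2 ⟨c, hc⟩
  choose V hVo hZV hVs hVa hVA using hV
  have hVd : ∀ j k x, x ∈ closure (V j) → x ∈ closure (V k) → j = k := by
    intro j k x hj hk
    by_contra hjk
    exact Set.disjoint_left.1 (hsd hjk) (hVs j hj) (hVs k hk)
  let a' : Fin 3 × Bool → Set M := fun c =>
    (a c ∩ (⋃ j, V j)ᶜ) ∪ ⋃ j : {j // c ∈ σ j}, (closure (V j) ∩ F)
  have hmem : ∀ c x, x ∈ a' c → (x ∈ a c ∧ ∀ j, x ∉ V j) ∨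
      ∃ j, c ∈ σ j ∧ x ∈ closure (V j) ∧ x ∈ F := by
    rintro c x (⟨h1, h2⟩ | h)
    · exact Or.inl ⟨h1, by simpa using h2⟩
    · obtain ⟨⟨j, hj⟩, h⟩ := Set.mem_iUnion.1 h
      exact Or.inr ⟨j, hj, h⟩
  have hmem1 : ∀ c x, x ∈ a c → (∀ j, x ∉ V j) → x ∈ a' c :=
    fun c x h1 h2 => Or.inl ⟨h1, by simpa using h2⟩
  have hmem2 : ∀ c x j, c ∈ σ j → x ∈ V j → x ∈ F → x ∈ a' c :=
    fun c x j h1 h2 h3 => Or.inr (Set.mem_iUnion.2 ⟨⟨j, h1⟩, subset_closure h2, h3⟩)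
  refine ⟨a', ⟨?_, ?_, ?_, ?_, ?_⟩, ?_⟩
  · intro c
    exact ((ha.closed c).inter (isOpen_iUnion hVo).isClosed_compl).union
      (isClosed_iUnion_of_finite fun j => isClosed_closure.inter hF)
  · intro c x hx
    rcases hmem c x hx with h | ⟨j, -, -, h⟩
    exacts [ha.sub c h.1, h]
  · intro c x hx hx'
    rcases hmem c x hx with h | ⟨j, hj, h, -⟩ <;> rcases hmem _ x hx' with h' | ⟨k, hk, h', -⟩
    · exact ha.disj c x h.1 h'.1
    · exact hVa k c hk x h' h.1
    · exact hVa j (bar c) (by simpa using hj) x h h'.1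
    · obtain rfl := hVd j k x h h'
      exact hσ j c hj hk
  · intro c x hx hxA
    by_cases h : ∃ j, x ∈ V j
    · obtain ⟨j, hj⟩ := h
      refine hmem2 c x j ?_ hj hx
      by_contra hc
      exact hVA j c hc x (subset_closure hj) hxA
    · push Not at h
      exact hmem1 c x (ha.face c x hx hxA) h
  · intro x hx
    by_cases h : ∃ j, x ∈ V j
    · obtain ⟨j, hj⟩ := h
      obtain ⟨c, hc⟩ := hne j
      exact ⟨c, hmem2 c x j hc hj hx⟩
    · push Not at h
      obtain ⟨c, hc⟩ := ha.cover x hx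
      exact ⟨c, hmem1 c x hc h⟩
  · intro j x hx c hxc
    rcases hmem c x hxc with h | ⟨k, hk, h, -⟩
    · exact absurd (hZV j hx) (h.2 j)
    · obtain rfl := hVd j k x (subset_closure (hZV j hx)) h
      exact hk

/-- Two colourings can be glued along a zero-dimensional intersection: near each point of `F ∩ G`
that lies in no face, the colour of `F` is changed to that of `G` in two steps, the intermediate
colour being of an index different from those of both. -/
lemma Colored.glue {M : Type} [TopologicalSpace M] [NormalSpace M]
    {A : Fin 3 × Bool → Set M} (hA : ∀ c, IsClosed (A c)) {F G : Set M} (hF : IsClosed F)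
    (hG : IsClosed G) {a a' : Fin 3 × Bool → Set M} (ha : Colored A F a) (ha' : Colored A G a')
    (hdim : CovDimLE ↥(F ∩ G) 0) : ∃ b, Colored A (F ∪ G) b := by
  classical
  -- successive sets of colours leading from the colours of `F` to those of `G`
  let Ty := {τ : Set (Fin 3 × Bool) × Set (Fin 3 × Bool) × Set (Fin 3 × Bool) //
    τ.1.Nonempty ∧ τ.2.1.Nonempty ∧ τ.2.2.Nonempty ∧ (∀ c ∈ τ.1, bar c ∉ τ.1) ∧
    (∀ c ∈ τ.2.1, bar c ∉ τ.2.1) ∧ (∀ c ∈ τ.2.2, bar c ∉ τ.2.2) ∧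
    (∀ c ∈ τ.1, bar c ∉ τ.2.1) ∧ (∀ c ∈ τ.2.1, bar c ∉ τ.2.2)}
  let bad : Ty → Fin 3 × Bool → Set M := fun τ c =>
    (if bar c ∈ τ.1.1 then a c else ∅) ∪ (if bar c ∈ τ.1.2.2 then a' c else ∅) ∪
    (if c ∈ τ.1.1 ∩ τ.1.2.1 ∩ τ.1.2.2 then ∅ else A c)
  have hbad : ∀ τ c, IsClosed (bad τ c) := by
    intro τ c
    refine IsClosed.union (IsClosed.union ?_ ?_) ?_ <;> split_ifs
    exacts [ha.closed c, isClosed_empty, ha'.closed c, isClosed_empty, isClosed_empty, hA c]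
  obtain ⟨κ, V, hκ, hVo, hVc, hVr, hVd⟩ := hdim Ty
    (fun τ => Subtype.val ⁻¹' (⋂ c, (bad τ c)ᶜ)) inferInstance
    (fun τ => (isOpen_iInter_of_finite fun c => (hbad τ c).isOpen_compl).preimage
      continuous_subtype_val)
    (by
      refine Set.eq_univ_of_forall fun z => Set.mem_iUnion.2 ?_
      obtain ⟨z, hzF, hzG⟩ := z
      by_cases hz : ∃ c, z ∈ A c
      · have hadm : ∀ c ∈ {c | z ∈ A c}, bar c ∉ {c | z ∈ A c} := fun c hc hc' =>
          ha.disj c z (ha.face c z hzF hc) (ha.face _ z hzF hc')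
        refine ⟨⟨({c | z ∈ A c}, {c | z ∈ A c}, {c | z ∈ A c}), hz, hz, hz, hadm, hadm, hadm,
          hadm, hadm⟩, ?_⟩
        simp only [Set.mem_preimage, Set.mem_iInter]
        rintro c ((h | h) | h) <;> split_ifs at h with hc
        · exact ha.disj c z h (ha.face _ z hzF hc)
        · exact h
        · exact ha'.disj c z h (ha'.face _ z hzG hc)
        · exact h
        · exact h
        · exact hc ⟨⟨h, h⟩, h⟩
      · push Not at hz
        obtain ⟨p, hp⟩ := ha.cover z hzF
        obtain ⟨p', hp'⟩ := ha'.cover z hzG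
        obtain ⟨l, hl, hl'⟩ : ∃ l : Fin 3, l ≠ p.1 ∧ l ≠ p'.1 := by
          generalize p.1 = i
          generalize p'.1 = j
          revert i j
          decide
        have hadm : ∀ q : Fin 3 × Bool, ∀ c ∈ ({q} : Set (Fin 3 × Bool)),
            bar c ∉ ({q} : Set (Fin 3 × Bool)) := by
          rintro ⟨i, b⟩ c rfl h
          simp [bar] at h
        refine ⟨⟨({p}, {(l, true)}, {p'}), Set.singleton_nonempty _, Set.singleton_nonempty _,
          Set.singleton_nonempty _, hadm _, hadm _, hadm _, ?_, ?_⟩, ?_⟩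
        · rintro c rfl h
          simp only [bar, Set.mem_singleton_iff, Prod.mk.injEq] at h
          exact hl h.1.symm
        · rintro c rfl h
          simp only [bar, Set.mem_singleton_iff] at h
          exact hl' (congrArg Prod.fst h)
        · simp only [Set.mem_preimage, Set.mem_iInter]
          rintro c ((h | h) | h) <;> split_ifs at h with hc
          · obtain rfl : bar c = p := hc
            exact ha.disj c z h hp
          · exact h
          · obtain rfl : bar c = p' := hc
            exact ha'.disj c z h hp'
          · exact h
          · exact h
          · exact hz c h)
  choose τ hτ using hVr
  have hVdisj : ∀ j k x, x ∈ V j → x ∈ V k → j = k := by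
    intro j k x hj hk
    have : Subsingleton {j // x ∈ V j} :=
      (Finite.card_le_one_iff_subsingleton).1 (by simpa using hVd x)
    exact congrArg Subtype.val (Subsingleton.elim (⟨j, hj⟩ : {j // x ∈ V j}) ⟨k, hk⟩)
  let Z : κ → Set M := fun j => Subtype.val '' V j
  have hZ : ∀ j, IsClosed (Z j) := by
    intro j
    apply (hF.inter hG).isClosedEmbedding_subtypeVal.isClosedMap
    have e : V j = (⋃ k : {k // k ≠ j}, V k)ᶜ := by
      ext x
      simp only [Set.mem_compl_iff, Set.mem_iUnion, not_exists]
      constructor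
      · rintro hx ⟨k, hk⟩ hx'
        exact hk (hVdisj k j x hx' hx)
      · intro hx
        obtain ⟨k, hk⟩ := Set.mem_iUnion.1 (hVc ▸ Set.mem_univ x : x ∈ ⋃ j, V j)
        by_cases hkj : k = j
        · exact hkj ▸ hk
        · exact absurd hk (hx ⟨k, hkj⟩)
    rw [e]
    exact (isOpen_iUnion fun k : {k // k ≠ j} => hVo k).isClosed_compl
  have hZd : Pairwise (Function.onFun Disjoint Z) := by
    intro j k hjk
    refine Set.disjoint_left.2 ?_
    rintro _ ⟨x, hx, rfl⟩ ⟨y, hy, hxy⟩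
    obtain rfl := Subtype.ext hxy
    exact hjk (hVdisj j k _ hx hy)
  have hZbad : ∀ j, ∀ x ∈ Z j, ∀ c, x ∉ bad (τ j) c := by
    rintro j _ ⟨x, hx, rfl⟩ c
    exact Set.mem_iInter.1 (hτ j hx) c
  have hZA : ∀ j, ∀ x ∈ Z j, ∀ c, x ∈ A c →
      c ∈ (τ j).1.1 ∩ (τ j).1.2.1 ∩ (τ j).1.2.2 := by
    intro j x hx c hxA
    by_contra hc
    exact hZbad j x hx c (Or.inr (by rwa [if_neg hc]))
  obtain ⟨a1, ha1, hσ1⟩ := ha.recolor hA hF hZ hZd (σ := fun j => (τ j).1.1)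
    (fun j => (τ j).2.1) (fun j => (τ j).2.2.2.2.1)
    (fun j x hx c hxc hc => hZbad j x hx c (Or.inl (Or.inl (by rwa [if_pos hc]))))
    (fun j x hx c hxA => (hZA j x hx c hxA).1.1)
  obtain ⟨a2, ha2, hσ2⟩ := ha1.recolor hA hF hZ hZd (σ := fun j => (τ j).1.2.1)
    (fun j => (τ j).2.2.1) (fun j => (τ j).2.2.2.2.2.1)
    (fun j x hx c hxc => (τ j).2.2.2.2.2.2.2.1 c (hσ1 j x hx c hxc))
    (fun j x hx c hxA => (hZA j x hx c hxA).1.2)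
  obtain ⟨a3, ha3, hσ3⟩ := ha2.recolor hA hF hZ hZd (σ := fun j => (τ j).1.2.2)
    (fun j => (τ j).2.2.2.1) (fun j => (τ j).2.2.2.2.2.2.1)
    (fun j x hx c hxc => (τ j).2.2.2.2.2.2.2.2 c (hσ2 j x hx c hxc))
    (fun j x hx c hxA => (hZA j x hx c hxA).2)
  have hmix : ∀ c x, x ∈ a3 c → x ∉ a' (bar c) := by
    intro c x hx hx'
    have hxZ : (⟨x, ha3.sub c hx, ha'.sub _ hx'⟩ : ↥(F ∩ G)) ∈ ⋃ j, V j := hVc ▸ Set.mem_univ _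
    obtain ⟨j, hj⟩ := Set.mem_iUnion.1 hxZ
    have hj' : x ∈ Z j := ⟨_, hj, rfl⟩
    have hc := hσ3 j x hj' c hx
    exact hZbad j x hj' (bar c) (Or.inl (Or.inr (by simpa [hc] using hx')))
  refine ⟨fun c => a3 c ∪ a' c, fun c => (ha3.closed c).union (ha'.closed c),
    fun c => Set.union_subset_union (ha3.sub c) (ha'.sub c), ?_, ?_, ?_⟩
  · rintro c x (hx | hx) (hx' | hx')
    · exact ha3.disj c x hx hx'
    · exact hmix c x hx hx'
    · exact hmix (bar c) x hx' (by simpa using hx)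
    · exact ha'.disj c x hx hx'
  · rintro c x (hx | hx) hxA
    · exact Or.inl (ha3.face c x hx hxA)
    · exact Or.inr (ha'.face c x hx hxA)
  · rintro x (hx | hx)
    · obtain ⟨c, hc⟩ := ha3.cover x hx
      exact ⟨c, Or.inl hc⟩
    · obtain ⟨c, hc⟩ := ha'.cover x hx
      exact ⟨c, Or.inr hc⟩

/-! ### Minimal sets on which three pairs of faces are essential -/

/-- The opposite faces `{f l ≤ 0}` and `{1 ≤ f l}`, indexed by colours. -/
def face3 {M : Type} (f : Fin 3 → M → ℝ) (c : Fin 3 × Bool) : Set M :=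
  if c.2 then {x | 1 ≤ f c.1 x} else {x | f c.1 x ≤ 0}

/-- Partitions (of the whole space) between the three pairs of faces always have a common point in
`F`. -/
def EssOn {M : Type} [TopologicalSpace M] (f : Fin 3 → M → ℝ) (F : Set M) : Prop :=
  ∀ O : Fin 3 → Bool → Set M, (∀ l, SepBy (f l) (O l)) → ∃ x ∈ F, ∀ l b, x ∉ O l b

lemma isClosed_face3 {M : Type} [TopologicalSpace M] {f : Fin 3 → M → ℝ}
    (hf : ∀ l, Continuous (f l)) (c : Fin 3 × Bool) : IsClosed (face3 f c) := by
  obtain ⟨l, b⟩ := c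
  cases b
  · simpa [face3] using isClosed_le (hf l) continuous_const
  · simpa [face3] using isClosed_le continuous_const (hf l)

lemma face3_bar {M : Type} {f : Fin 3 → M → ℝ} {c : Fin 3 × Bool} {x : M} (h : x ∈ face3 f c) :
    x ∉ face3 f (bar c) := by
  obtain ⟨l, b⟩ := c
  cases b <;> simp [face3, bar] at h ⊢ <;> linarith

lemma not_essOn_of_colored {M : Type} [TopologicalSpace M] [NormalSpace M] {f : Fin 3 → M → ℝ}
    (hf : ∀ l, Continuous (f l)) {F : Set M} {a : Fin 3 × Bool → Set M}
    (ha : Colored (face3 f) F a) : ¬ EssOn f F := by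
  intro h
  have hdis : ∀ c, ∀ x ∈ a c ∪ face3 f c, x ∉ a (bar c) ∪ face3 f (bar c) := by
    rintro c x (h1 | h1) (h2 | h2)
    · exact ha.disj c x h1 h2
    · exact ha.disj c x h1 (ha.face _ x (ha.sub _ h1) h2)
    · exact ha.disj c x (ha.face _ x (ha.sub _ h2) h1) h2
    · exact face3_bar h1 h2
  have hcl : ∀ c, IsClosed (a c ∪ face3 f c) := fun c =>
    (ha.closed c).union (isClosed_face3 hf c)
  have hsep := fun l => NormalSpace.normal _ _ (hcl (l, false)) (hcl (l, true))
    (Set.disjoint_left.2 (hdis (l, false)))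
  choose U V hU hV hUa hVa hUV using hsep
  have hO : ∀ c : Fin 3 × Bool, a c ∪ face3 f c ⊆ if c.2 then V c.1 else U c.1 := by
    rintro ⟨l, b⟩
    cases b
    exacts [hUa l, hVa l]
  obtain ⟨x, hx, hxO⟩ := h (fun l b => if b then V l else U l) fun l =>
    { isOpen := by
        intro b
        cases b
        exacts [hU l, hV l]
      disj := hUV l
      lo := fun x hx => hO (l, false) (Or.inr (by simpa [face3] using hx))
      hi := fun x hx => hO (l, true) (Or.inr (by simpa [face3] using hx)) }
  obtain ⟨c, hc⟩ := ha.cover x hx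
  exact hxO c.1 c.2 (hO c (Or.inl hc))

lemma exists_colored {M : Type} [TopologicalSpace M] [NormalSpace M] {f : Fin 3 → M → ℝ}
    (hf : ∀ l, Continuous (f l)) {F : Set M} (hF : IsClosed F) (h : ¬ EssOn f F) :
    ∃ a, Colored (face3 f) F a := by
  unfold EssOn at h
  push Not at h
  obtain ⟨O, hO, hc⟩ := h
  obtain ⟨v, hvF, hv, hvO⟩ := exists_subset_iUnion_closed_subset
    (u := fun c : Fin 3 × Bool => O c.1 c.2) hF (fun c => (hO c.1).isOpen c.2)
    (fun _ _ => Set.toFinite _) (by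
      intro x hx
      obtain ⟨l, b, h⟩ := hc x hx
      exact Set.mem_iUnion.2 ⟨(l, b), h⟩)
  have hfO : ∀ c, face3 f c ⊆ O c.1 c.2 := by
    rintro ⟨l, b⟩ x hx
    cases b
    · exact (hO l).lo x (by simpa [face3] using hx)
    · exact (hO l).hi x (by simpa [face3] using hx)
  have hsub : ∀ c, v c ∪ face3 f c ⊆ O c.1 c.2 := fun c => Set.union_subset (hvO c) (hfO c)
  refine ⟨fun c => (v c ∪ face3 f c) ∩ F, ?_, ?_, ?_, ?_, ?_⟩
  · exact fun c => ((hv c).union (isClosed_face3 hf c)).inter hF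
  · exact fun c => Set.inter_subset_right
  · rintro ⟨l, b⟩ x hx hx'
    have h1 := hsub _ hx.1
    have h2 := hsub _ hx'.1
    cases b
    · exact Set.disjoint_left.1 (hO l).disj h1 h2
    · exact Set.disjoint_left.1 (hO l).disj h2 h1
  · exact fun c x hx hxc => ⟨Or.inr hxc, hx⟩
  · intro x hx
    obtain ⟨c, hc⟩ := Set.mem_iUnion.1 (hvF hx)
    exact ⟨c, Or.inl hc, hx⟩

lemma sepBy_level {M : Type} [TopologicalSpace M] {f : M → ℝ} (hf : Continuous f) {t : ℝ}
    (h0 : 0 < t) (h1 : t < 1) : SepBy f (fun b => if b then {x | t < f x} else {x | f x < t}) where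
  isOpen b := by
    cases b
    exacts [isOpen_lt hf continuous_const, isOpen_lt continuous_const hf]
  disj := Set.disjoint_left.2 fun x hx hx' => lt_asymm (show f x < t from hx) hx'
  lo x hx := show f x < t by linarith
  hi x hx := show t < f x by linarith

lemma EssOn.nontrivial {M : Type} [TopologicalSpace M] {f : Fin 3 → M → ℝ}
    (hf : ∀ l, Continuous (f l)) {F : Set M} (h : EssOn f F) : F.Nontrivial := by
  by_contra hcon
  rw [Set.not_nontrivial_iff] at hcon
  obtain ⟨x, hx, hx'⟩ := h _ fun l => sepBy_level (hf l) (t := 1/3) (by norm_num) (by norm_num)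
  obtain ⟨y, hy, hy'⟩ := h _ fun l => sepBy_level (hf l) (t := 2/3) (by norm_num) (by norm_num)
  obtain rfl := hcon hx hy
  have h1 := hx' 0 true
  have h2 := hy' 0 false
  simp only [if_true, Bool.false_eq_true, if_false, Set.mem_ofPred_eq, not_lt] at h1 h2
  linarith

lemma EssOn.exists_minimal {M : Type} [TopologicalSpace M] [CompactSpace M]
    {f : Fin 3 → M → ℝ} {Y : Set M} (hY : IsClosed Y) (h : EssOn f Y) :
    ∃ X ⊆ Y, IsClosed X ∧ EssOn f X ∧ ∀ F ⊆ X, IsClosed F → EssOn f F → F = X := by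
  obtain ⟨X, hXY, hX⟩ := zorn_superset_nonempty {F : Set M | IsClosed F ∧ EssOn f F} (by
    intro c hc hch hne
    refine ⟨⋂₀ c, ⟨isClosed_sInter fun s hs => (hc hs).1, ?_⟩, fun s hs => Set.sInter_subset_of_mem hs⟩
    intro O hO
    let K : Set M := {x | ∀ l b, x ∉ O l b}
    have hK : IsClosed K := by
      have e : K = ⋂ l, ⋂ b, (O l b)ᶜ := by
        ext x
        simp [K]
      rw [e]
      exact isClosed_iInter fun l => isClosed_iInter fun b => ((hO l).isOpen b).isClosed_compl
    have : Nonempty ((fun s => s ∩ K) '' c) := (hne.image _).to_subtype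
    obtain ⟨x, hx⟩ := IsCompact.nonempty_sInter_of_directed_nonempty_isCompact_isClosed
      (S := (fun s => s ∩ K) '' c)
      (by
        rintro _ ⟨s, hs, rfl⟩ _ ⟨t, ht, rfl⟩
        rcases hch.total hs ht with hst | hst
        · exact ⟨_, ⟨s, hs, rfl⟩, subset_rfl, Set.inter_subset_inter_left _ hst⟩
        · exact ⟨_, ⟨t, ht, rfl⟩, Set.inter_subset_inter_left _ hst, subset_rfl⟩)
      (by
        rintro _ ⟨s, hs, rfl⟩
        exact (hc hs).2 O hO)
      (by
        rintro _ ⟨s, hs, rfl⟩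
        exact ((hc hs).1.inter hK).isCompact)
      (by
        rintro _ ⟨s, hs, rfl⟩
        exact (hc hs).1.inter hK)
    obtain ⟨s, hs⟩ := hne
    exact ⟨x, fun t ht => (hx _ ⟨t, ht, rfl⟩).1, (hx _ ⟨s, hs, rfl⟩).2⟩) Y ⟨hY, h⟩
  exact ⟨X, hXY, hX.prop.1, hX.prop.2, fun F hF h1 h2 => subset_antisymm hF (hX.2 ⟨h1, h2⟩ hF)⟩

/-- A closed set on which the faces are minimally essential is not disconnected by a
zero-dimensional closed set. -/
lemma isPreconnected_diff_of_minimal {M : Type} [TopologicalSpace M] [NormalSpace M]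
    {f : Fin 3 → M → ℝ} (hf : ∀ l, Continuous (f l)) {X : Set M} (hX : IsClosed X)
    (hess : EssOn f X) (hmin : ∀ F ⊆ X, IsClosed F → EssOn f F → F = X) {L : Set M}
    (hL : IsClosed L) (hLX : L ⊆ X) (hdim : CovDimLE ↥L 0) : IsPreconnected (X \ L) := by
  rw [isPreconnected_iff_subset_of_disjoint]
  intro U V hU hV hUV hd
  by_contra! hcon
  obtain ⟨h1, h2⟩ := hcon
  obtain ⟨p, hp, hpU⟩ := Set.not_subset.1 h1
  obtain ⟨q, hq, hqV⟩ := Set.not_subset.1 h2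
  have key : ∀ O : Set M, IsOpen O → ∀ p ∈ X \ L, p ∈ O →
      ∃ a, Colored (face3 f) ((X ∩ Oᶜ) ∪ L) a := by
    intro O hO p hp hpO
    have hc := (hX.inter hO.isClosed_compl).union hL
    refine exists_colored hf hc fun hE => ?_
    have e := hmin _ (Set.union_subset Set.inter_subset_left hLX) hc hE
    rcases e.symm ▸ hp.1 with h | h
    exacts [h.2 hpO, hp.2 h]
  obtain ⟨a, ha⟩ := key V hV p hp ((hUV hp).resolve_left hpU)
  obtain ⟨a', ha'⟩ := key U hU q hq ((hUV hq).resolve_right hqV)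
  have e1 : ((X ∩ Vᶜ) ∪ L) ∩ ((X ∩ Uᶜ) ∪ L) = L := by
    ext x
    constructor
    · rintro ⟨h | h, h' | h'⟩
      · by_contra hx
        rcases hUV ⟨h.1, hx⟩ with h'' | h''
        exacts [h'.2 h'', h.2 h'']
      all_goals assumption
    · exact fun h => ⟨Or.inr h, Or.inr h⟩
  have e2 : ((X ∩ Vᶜ) ∪ L) ∪ ((X ∩ Uᶜ) ∪ L) = X := by
    apply subset_antisymm
    · exact Set.union_subset (Set.union_subset Set.inter_subset_left hLX)
        (Set.union_subset Set.inter_subset_left hLX)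
    · intro x hx
      by_cases hxL : x ∈ L
      · exact Or.inl (Or.inr hxL)
      by_cases hxV : x ∈ V
      · refine Or.inr (Or.inl ⟨hx, fun hxU => ?_⟩)
        exact (hd ▸ ⟨⟨hx, hxL⟩, hxU, hxV⟩ : x ∈ (∅ : Set M))
      · exact Or.inl (Or.inl ⟨hx, hxV⟩)
  obtain ⟨b, hb⟩ := ha.glue (isClosed_face3 hf) ((hX.inter hV.isClosed_compl).union hL)
    ((hX.inter hU.isClosed_compl).union hL) ha' (e1.symm ▸ hdim)
  rw [e2] at hb
  exact not_essOn_of_colored hf hb hess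

/-! ### Covering dimension and strong infinite dimension -/

lemma CovDimLE.of_homeomorph {X Y : Type} [TopologicalSpace X] [TopologicalSpace Y] (e : X ≃ₜ Y)
    {n : ℕ} (h : CovDimLE X n) : CovDimLE Y n := by
  intro ι U hι hU hc
  obtain ⟨κ, V, hκ, hV, hVc, hVU, hn⟩ := h ι (fun i => e ⁻¹' U i) hι
    (fun i => (hU i).preimage e.continuous) (by rw [← Set.preimage_iUnion, hc, Set.preimage_univ])
  refine ⟨κ, fun j => e.symm ⁻¹' V j, hκ, fun j => (hV j).preimage e.symm.continuous,
    by rw [← Set.preimage_iUnion, hVc, Set.preimage_univ], fun j => ?_, fun x => hn (e.symm x)⟩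
  obtain ⟨i, hi⟩ := hVU j
  exact ⟨i, fun x hx => by simpa using hi hx⟩

lemma covDimLE_of_isEmpty {X : Type} [TopologicalSpace X] [IsEmpty X] (n : ℕ) : CovDimLE X n :=
  fun _ U hι hU hc => ⟨_, U, hι, hU, hc, fun i => ⟨i, subset_rfl⟩, fun x => isEmptyElim x⟩

lemma not_covDimLE_zero {X : Type} [TopologicalSpace X] [T1Space X] [PreconnectedSpace X]
    [Nontrivial X] : ¬ CovDimLE X 0 := by
  intro h
  obtain ⟨a, b, hab⟩ := exists_pair_ne X
  obtain ⟨κ, V, hκ, hV, hVc, hVU, hn⟩ := h Bool (fun i => if i then {a}ᶜ else {b}ᶜ) inferInstance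
    (by
      intro i
      cases i
      exacts [isOpen_compl_singleton, isOpen_compl_singleton])
    (by
      refine Set.eq_univ_of_forall fun x => Set.mem_iUnion.2 ?_
      by_cases hx : x = a
      · exact ⟨false, by simpa [hx] using hab⟩
      · exact ⟨true, by simpa using hx⟩)
  have hdis : ∀ j k x, x ∈ V j → x ∈ V k → j = k := by
    intro j k x hj hk
    have : Subsingleton {j // x ∈ V j} :=
      (Finite.card_le_one_iff_subsingleton).1 (by simpa using hn x)
    exact congrArg Subtype.val (Subsingleton.elim (⟨j, hj⟩ : {j // x ∈ V j}) ⟨k, hk⟩)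
  obtain ⟨j, hj⟩ := Set.mem_iUnion.1 (hVc ▸ Set.mem_univ a : a ∈ ⋃ j, V j)
  have hclosed : IsClosed (V j) := by
    have e : V j = (⋃ k : {k // k ≠ j}, V k)ᶜ := by
      ext x
      simp only [Set.mem_compl_iff, Set.mem_iUnion, not_exists]
      constructor
      · rintro hx ⟨k, hk⟩ hx'
        exact hk (hdis k j x hx' hx)
      · intro hx
        obtain ⟨k, hk⟩ := Set.mem_iUnion.1 (hVc ▸ Set.mem_univ x : x ∈ ⋃ j, V j)
        by_cases hkj : k = j
        · exact hkj ▸ hk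
        · exact absurd hk (hx ⟨k, hkj⟩)
    rw [e]
    exact (isOpen_iUnion fun k : {k // k ≠ j} => hV k).isClosed_compl
  have huniv : V j = Set.univ := IsClopen.eq_univ ⟨hclosed, hV j⟩ ⟨a, hj⟩
  obtain ⟨i, hi⟩ := hVU j
  rw [huniv] at hi
  cases i
  · exact hi (Set.mem_univ b) rfl
  · exact hi (Set.mem_univ a) rfl

/-- In dimension at most `n`, any `n + 1` pairs of disjoint closed sets have partitions without
common point: a cover of order at most `n + 1` is refined by the `n + 1` disjoint families of sets
on which the largest distances to the complements of the members are attained exactly `i + 1`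
times, `i ≤ n`. -/
lemma CovDimLE.exists_partitions {X : Type} [TopologicalSpace X] [MetrizableSpace X] {n : ℕ}
    (h : CovDimLE X n) {A B : ℕ → Set X} (hA : ∀ i, IsClosed (A i)) (hB : ∀ i, IsClosed (B i))
    (hAB : ∀ i, Disjoint (A i) (B i)) :
    ∃ L : ℕ → Set X, (∀ i, IsPartitionBetween (L i) (A i) (B i)) ∧ ∀ x, ∃ i, x ∉ L i := by
  classical
  let _ := metrizableSpaceMetric X
  obtain ⟨κ, V, hκ, hV, hVc, hVU, hn⟩ := h (Fin (n + 1) → Bool)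
    (fun ε => ⋂ i : Fin (n + 1), if ε i then (A i)ᶜ else (B i)ᶜ) inferInstance
    (by
      intro ε
      refine isOpen_iInter_of_finite fun i => ?_
      split_ifs
      exacts [(hA i).isOpen_compl, (hB i).isOpen_compl])
    (by
      refine Set.eq_univ_of_forall fun x => Set.mem_iUnion.2 ⟨fun i => decide (x ∉ A i), ?_⟩
      refine Set.mem_iInter.2 fun i => ?_
      by_cases hx : x ∈ A i
      · simpa [hx] using Set.disjoint_left.1 (hAB i) hx
      · simp [hx])
  have := Fintype.ofFinite κ
  let d : κ → X → ENNReal := fun v x => Metric.infEDist x (V v)ᶜ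
  have hd : ∀ v, Continuous (d v) := fun v => Metric.continuous_infEDist
  have hd0 : ∀ v x, 0 < d v x ↔ x ∈ V v := by
    intro v x
    rw [pos_iff_ne_zero, Ne, ← Metric.mem_iff_infEDist_zero_of_closed (hV v).isClosed_compl]
    simp
  let W : Finset κ → Set X := fun F => {x | ∀ v ∈ F, 0 < d v x ∧ ∀ w, w ∉ F → d w x < d v x}
  have hW : ∀ F, IsOpen (W F) := by
    intro F
    have e : W F = ⋂ v : F, ({x | 0 < d v x} ∩ ⋂ w : {w // w ∉ F}, {x | d w x < d v x}) := by
      ext x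
      simp [W]
    rw [e]
    exact isOpen_iInter_of_finite fun v => (isOpen_lt continuous_const (hd _)).inter
      (isOpen_iInter_of_finite fun w => isOpen_lt (hd _) (hd _))
  have hWd : ∀ F G, F.card = G.card → ∀ x, x ∈ W F → x ∈ W G → F = G := by
    intro F G hFG x hF hG
    by_contra hne
    have h1 : ¬ F ⊆ G := fun h => hne (Finset.eq_of_subset_of_card_le h hFG.ge)
    have h2 : ¬ G ⊆ F := fun h => hne (Finset.eq_of_subset_of_card_le h hFG.le).symm
    obtain ⟨v, hv, hv'⟩ := Finset.not_subset.1 h1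
    obtain ⟨w, hw, hw'⟩ := Finset.not_subset.1 h2
    exact lt_asymm ((hF v hv).2 w hw') ((hG w hw).2 v hv')
  have hWc : ∀ x, ∃ F, F.card ≤ n + 1 ∧ F.Nonempty ∧ x ∈ W F := by
    intro x
    obtain ⟨v₀, hv₀⟩ := Set.mem_iUnion.1 (hVc ▸ Set.mem_univ x : x ∈ ⋃ j, V j)
    obtain ⟨v, -, hv⟩ := Finset.exists_max_image Finset.univ (fun v => d v x) ⟨v₀, Finset.mem_univ _⟩
    have hpos : 0 < d v x := ((hd0 v₀ x).2 hv₀).trans_le (hv v₀ (Finset.mem_univ _))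
    refine ⟨Finset.univ.filter fun w => d w x = d v x, ?_, ⟨v, by simp⟩, ?_⟩
    · refine le_trans ?_ (hn x)
      rw [Nat.card_eq_fintype_card, Fintype.card_subtype]
      refine Finset.card_le_card fun w hw => ?_
      simp only [Finset.mem_filter, Finset.mem_univ, true_and] at hw ⊢
      exact (hd0 w x).1 (hw ▸ hpos)
    · intro w hw
      simp only [Finset.mem_filter, Finset.mem_univ, true_and] at hw
      refine ⟨hw ▸ hpos, fun u hu => ?_⟩
      simp only [Finset.mem_filter, Finset.mem_univ, true_and] at hu
      rw [hw]
      exact lt_of_le_of_ne (hv u (Finset.mem_univ _)) hu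
  have hWAB : ∀ i ≤ n, ∀ F : Finset κ, F.Nonempty →
      Disjoint (W F) (A i) ∨ Disjoint (W F) (B i) := by
    rintro i hi F ⟨v, hv⟩
    obtain ⟨ε, hε⟩ := hVU v
    have hsub : ∀ x ∈ W F, x ∈ if ε ⟨i, by omega⟩ then (A i)ᶜ else (B i)ᶜ := fun x hx =>
      Set.mem_iInter.1 (hε ((hd0 v x).1 (hx v hv).1)) ⟨i, by omega⟩
    by_cases hb : ε ⟨i, by omega⟩ = true
    · exact Or.inl (Set.disjoint_left.2 fun x hx => by simpa [hb] using hsub x hx)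
    · exact Or.inr (Set.disjoint_left.2 fun x hx => by simpa [hb] using hsub x hx)
  -- `R i` misses `A i`, and `S i` misses `B i` if `i ≤ n`
  let R : ℕ → Set X := fun i => ⋃ F : {F : Finset κ // F.card = i + 1 ∧ Disjoint (W F) (A i)}, W F
  let S : ℕ → Set X := fun i => ⋃ F : {F : Finset κ // F.card = i + 1 ∧ ¬ Disjoint (W F) (A i)}, W F
  have hR : ∀ i, IsOpen (R i) := fun i => isOpen_iUnion fun F => hW _
  have hS : ∀ i, IsOpen (S i) := fun i => isOpen_iUnion fun F => hW _
  have hRA : ∀ i, ∀ x ∈ R i, x ∉ A i := by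
    intro i x hx
    obtain ⟨⟨F, hF, hFA⟩, hx⟩ := Set.mem_iUnion.1 hx
    exact Set.disjoint_left.1 hFA hx
  have hSB : ∀ i ≤ n, ∀ x ∈ S i, x ∉ B i := by
    intro i hi x hx
    obtain ⟨⟨F, hF, hFA⟩, hx⟩ := Set.mem_iUnion.1 hx
    exact Set.disjoint_left.1 ((hWAB i hi F (Finset.card_pos.1 (by omega))).resolve_left hFA) hx
  have hRS : ∀ i, ∀ x ∈ R i, x ∉ S i := by
    intro i x hx hx'
    obtain ⟨⟨F, hF, hFA⟩, hx⟩ := Set.mem_iUnion.1 hx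
    obtain ⟨⟨G, hG, hGA⟩, hx'⟩ := Set.mem_iUnion.1 hx'
    exact hGA (hWd F G (hF.trans hG.symm) x hx hx' ▸ hFA)
  obtain ⟨K, hKc, hK, hKU⟩ := exists_iUnion_eq_closed_subset
    (u := fun i : Fin (n + 1) => R i ∪ S i) (fun i => (hR i).union (hS i))
    (fun x => Set.toFinite _) (by
      refine Set.eq_univ_of_forall fun x => Set.mem_iUnion.2 ?_
      obtain ⟨F, hF, hne, hx⟩ := hWc x
      have := hne.card_pos
      refine ⟨⟨F.card - 1, by omega⟩, ?_⟩
      by_cases hFA : Disjoint (W F) (A (F.card - 1))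
      · exact Or.inl (Set.mem_iUnion.2 ⟨⟨F, by simp; omega, hFA⟩, hx⟩)
      · exact Or.inr (Set.mem_iUnion.2 ⟨⟨F, by simp; omega, hFA⟩, hx⟩))
  have hsep : ∀ i, ∃ U V : Set X, IsOpen U ∧ IsOpen V ∧ A i ⊆ U ∧ B i ⊆ V ∧ Disjoint U V ∧
      ∀ hi : i < n + 1, K ⟨i, hi⟩ ⊆ U ∪ V := by
    intro i
    by_cases hi : i < n + 1
    · obtain ⟨U, V, hU, hV, hCU, hDV, hUV⟩ := NormalSpace.normal
        (A i ∪ (K ⟨i, hi⟩ \ R i)) (B i ∪ (K ⟨i, hi⟩ \ S i))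
        ((hA i).union ((hK _).sdiff (hR i))) ((hB i).union ((hK _).sdiff (hS i)))
        (by
          rw [Set.disjoint_left]
          rintro x (h1 | h1) (h2 | h2)
          · exact Set.disjoint_left.1 (hAB i) h1 h2
          · exact hRA i x ((hKU _ h2.1).resolve_right h2.2) h1
          · exact hSB i (by omega) x ((hKU _ h1.1).resolve_left h1.2) h2
          · exact h1.2 ((hKU _ h1.1).resolve_right h2.2))
      refine ⟨U, V, hU, hV, fun x hx => hCU (Or.inl hx), fun x hx => hDV (Or.inl hx), hUV, ?_⟩
      intro _ x hx
      by_cases hxR : x ∈ R i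
      · exact Or.inr (hDV (Or.inr ⟨hx, hRS i x hxR⟩))
      · exact Or.inl (hCU (Or.inr ⟨hx, hxR⟩))
    · obtain ⟨U, V, hU, hV, hAU, hBV, hUV⟩ := NormalSpace.normal _ _ (hA i) (hB i) (hAB i)
      exact ⟨U, V, hU, hV, hAU, hBV, hUV, fun h => absurd h hi⟩
  choose U V hU hV hAU hBV hUV hKUV using hsep
  refine ⟨fun i => (U i ∪ V i)ᶜ, fun i => ⟨((hU i).union (hV i)).isClosed_compl, U i, V i, hU i,
    hV i, hAU i, hBV i, hUV i, compl_compl _⟩, fun x => ?_⟩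
  obtain ⟨i, hi⟩ := Set.mem_iUnion.1 (hKc ▸ Set.mem_univ x : x ∈ ⋃ i, K i)
  exact ⟨i, fun hx => hx (hKUV i i.2 hi)⟩

lemma StronglyInfiniteDimensional.not_covDimLE {X : Type} [TopologicalSpace X] [MetrizableSpace X]
    (h : StronglyInfiniteDimensional X) (n : ℕ) : ¬ CovDimLE X n := by
  intro hn
  obtain ⟨A, B, hAB, hL⟩ := h
  obtain ⟨L, hLp, hLe⟩ := hn.exists_partitions (fun i => (hAB i).1) (fun i => (hAB i).2.1)
    (fun i => (hAB i).2.2)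
  obtain ⟨x, hx⟩ := hL L hLp
  obtain ⟨i, hi⟩ := hLe x
  exact hi (Set.mem_iInter.1 hx i)

/-- A space is zero-dimensional if every open set contains, around each of its points, a clopen set
from a fixed sequence. -/
lemma covDimLE_zero_of_clopen {S : Type} [TopologicalSpace S] {Q : ℕ → Set S}
    (hQ : ∀ j, IsClopen (Q j)) (hb : ∀ U, IsOpen U → ∀ x ∈ U, ∃ j, x ∈ Q j ∧ Q j ⊆ U) :
    CovDimLE S 0 := by
  classical
  intro ι U hι hU hc
  let R : ℕ → Set S := fun j => if ∃ i, Q j ⊆ U i then Q j else ∅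
  have hR : ∀ j, IsClopen (R j) := by
    intro j
    simp only [R]
    split_ifs
    exacts [hQ j, isClopen_empty]
  have hRU : ∀ j, (R j).Nonempty → ∃ i, R j ⊆ U i := by
    intro j hj
    by_cases h : ∃ i, Q j ⊆ U i
    · simpa only [R, if_pos h] using h
    · simp [R, h] at hj
  have hRc : ⋃ j, R j = Set.univ := by
    refine Set.eq_univ_of_forall fun x => ?_
    obtain ⟨i, hi⟩ := Set.mem_iUnion.1 (hc ▸ Set.mem_univ x : x ∈ ⋃ i, U i)
    obtain ⟨j, hj, hjU⟩ := hb (U i) (hU i) x hi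
    refine Set.mem_iUnion.2 ⟨j, ?_⟩
    simpa only [R, if_pos (⟨i, hjU⟩ : ∃ i, Q j ⊆ U i)] using hj
  have hD : ∀ j, IsClopen (disjointed R j) := fun j =>
    disjointedRec (p := IsClopen) (fun t i h => h.diff (hR i)) (hR j)
  have hDc : ⋃ j, disjointed R j = Set.univ := by rw [iUnion_disjointed, hRc]
  have hDd : ∀ j k x, x ∈ disjointed R j → x ∈ disjointed R k → j = k := by
    intro j k x hj hk
    by_contra hne
    exact Set.disjoint_left.1 (disjoint_disjointed R hne) hj hk
  have hDU : ∀ j, ∃ i : Option ι, ∀ x ∈ disjointed R j, ∃ i', i = some i' ∧ R j ⊆ U i' := by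
    intro j
    by_cases h : (R j).Nonempty
    · obtain ⟨i, hi⟩ := hRU j h
      exact ⟨some i, fun x hx => ⟨i, rfl, hi⟩⟩
    · exact ⟨none, fun x hx => absurd ⟨x, disjointed_subset R j hx⟩ h⟩
  choose c hcj using hDU
  refine ⟨ι, fun i => ⋃ j : {j // c j = some i}, disjointed R j, hι,
    fun i => isOpen_iUnion fun j => (hD j).isOpen, ?_, fun i => ⟨i, ?_⟩, fun x => ?_⟩
  · refine Set.eq_univ_of_forall fun x => ?_
    obtain ⟨j, hj⟩ := Set.mem_iUnion.1 (hDc ▸ Set.mem_univ x : x ∈ ⋃ j, disjointed R j)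
    obtain ⟨i, hi, -⟩ := hcj j x hj
    exact Set.mem_iUnion.2 ⟨i, Set.mem_iUnion.2 ⟨⟨j, hi⟩, hj⟩⟩
  · intro x hx
    obtain ⟨⟨j, hji⟩, hj⟩ := Set.mem_iUnion.1 hx
    obtain ⟨i', hi', hR'⟩ := hcj j x hj
    obtain rfl : i = i' := Option.some.inj (hji.symm.trans hi')
    exact hR' (disjointed_subset R j hj)
  · rw [zero_add, Finite.card_le_one_iff_subsingleton]
    refine ⟨?_⟩
    rintro ⟨i, hi⟩ ⟨k, hk⟩
    obtain ⟨⟨j, hji⟩, hj⟩ := Set.mem_iUnion.1 hi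
    obtain ⟨⟨j', hjk⟩, hj'⟩ := Set.mem_iUnion.1 hk
    obtain rfl := hDd j j' x hj hj'
    exact Subtype.ext (Option.some.inj (hji.symm.trans hjk))

/-- The dichotomy behind hereditary strong infinite dimension. Let the sequence `ψ` be uniformly
dense among the continuous functions, and for each `j` let the partitions `O j` be universal on the
levels of `ψ j`. A space `S` embedded in the common part of all these partitions either misses a
level of each `ψ j`, and then has a clopen base, or meets all levels of some `ψ j`, and then the
pairs `{φ j i ≤ 1/3}`, `{2/3 ≤ φ j i}` witness strong infinite dimension. -/
lemma covDimLE_zero_or_stronglyInfiniteDimensional {M : Type} [TopologicalSpace M]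
    [CompactSpace M] [MetrizableSpace M] {φ : ℕ → ℕ → M → ℝ} {ψ : ℕ → M → ℝ}
    (hφ : ∀ j i, Continuous (φ j i)) (hψ : ∀ j, Continuous (ψ j))
    (hdense : ∀ h : M → ℝ, Continuous h → ∀ ε > 0, ∃ k, ∀ x, |ψ k x - h x| < ε)
    {O : ℕ → ℕ → Bool → Set M}
    (hO : ∀ j, ∀ G : ℕ → Bool → Set M, (∀ i b, IsOpen (G i b)) →
      (∀ i x, (x ∈ G i false ∨ φ j i x < 1/3) → ¬ (x ∈ G i true ∨ 2/3 < φ j i x)) →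
      ∃ r ∈ Set.Icc (1/4 : ℝ) (3/4), ∀ x, ψ j x = r → ∀ i b, x ∈ G i b → x ∈ O j i b)
    {S : Type} [TopologicalSpace S] {e : S → M} (he : IsEmbedding e)
    (heO : ∀ s j i b, e s ∉ O j i b) : CovDimLE S 0 ∨ StronglyInfiniteDimensional S := by
  by_cases hlev : ∀ j, ∃ t ∈ Set.Icc (1/4 : ℝ) (3/4), ∀ s, ψ j (e s) ≠ t
  · left
    choose t ht hts using hlev
    have hc : ∀ j, Continuous fun s => ψ j (e s) := fun j => (hψ j).comp he.continuous
    refine covDimLE_zero_of_clopen (Q := fun j => {s | ψ j (e s) < t j}) (fun j => ⟨?_, ?_⟩) ?_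
    · have e' : {s | ψ j (e s) < t j} = {s | ψ j (e s) ≤ t j} := by
        ext s
        exact ⟨fun h => le_of_lt (show ψ j (e s) < t j from h), fun h => lt_of_le_of_ne h (hts j s)⟩
      rw [e']
      exact isClosed_le (hc j) continuous_const
    · exact isOpen_lt (hc j) continuous_const
    · intro U hU x hx
      obtain ⟨U', hU', rfl⟩ := he.isOpen_iff.1 hU
      obtain ⟨h, h0, h1, -⟩ := exists_continuous_zero_one_of_isClosed
        (isClosed_singleton (x := e x)) hU'.isClosed_compl
        (Set.disjoint_singleton_left.2 fun h => h hx)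
      obtain ⟨k, hk⟩ := hdense h h.continuous (1/5) (by norm_num)
      refine ⟨k, ?_, fun s hs => ?_⟩
      · have h2 := abs_lt.1 (hk (e x))
        have h3 : h (e x) = 0 := h0 rfl
        have := (ht k).1
        change ψ k (e x) < t k
        linarith
      · by_contra hsU
        have h2 := abs_lt.1 (hk (e s))
        have h3 : h (e s) = 1 := h1 hsU
        have := (ht k).2
        change ψ k (e s) < t k at hs
        linarith
  · right
    push Not at hlev
    obtain ⟨j, hj⟩ := hlev
    have hc : ∀ i, Continuous fun s => φ j i (e s) := fun i => (hφ j i).comp he.continuous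
    refine ⟨fun i => {s | φ j i (e s) ≤ 1/3}, fun i => {s | 2/3 ≤ φ j i (e s)}, fun i =>
      ⟨isClosed_le (hc i) continuous_const, isClosed_le continuous_const (hc i), ?_⟩, ?_⟩
    · rw [Set.disjoint_left]
      intro s h1 h2
      simp only [Set.mem_ofPred_eq] at h1 h2
      linarith
    intro L hL
    choose hLc U V hU hV hAU hBV hUV hLe using hL
    have hsd : ∀ U V : Set S, IsOpen V → Disjoint U V → Disjoint (closure (e '' U)) (e '' V) := by
      intro U V hV hUV
      rw [Set.disjoint_left]
      rintro _ hx ⟨v, hv, rfl⟩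
      have : v ∈ closure U := by
        rw [he.isInducing.closure_eq_preimage_closure_image]
        exact hx
      obtain ⟨u, hu1, hu2⟩ := mem_closure_iff.1 this V hV hv
      exact Set.disjoint_left.1 hUV hu2 hu1
    have hsep := fun i => separatedNhds_iff_disjoint.2
      (CompletelyNormalSpace.completely_normal (hsd (U i) (V i) (hV i) (hUV i))
        (hsd (V i) (U i) (hU i) (hUV i).symm).symm)
    choose U' V' hU' hV' hUU hVV hUV' using hsep
    obtain ⟨r, hr, hrO⟩ := hO j
      (fun i b => if b then V' i ∩ {x | 1/3 < φ j i x} else U' i ∩ {x | φ j i x < 2/3})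
      (by
        intro i b
        cases b
        · exact (hU' i).inter (isOpen_lt (hφ j i) continuous_const)
        · exact (hV' i).inter (isOpen_lt continuous_const (hφ j i)))
      (by
        intro i x hx hx'
        simp only [if_true, Bool.false_eq_true, if_false, Set.mem_inter_iff,
          Set.mem_ofPred_eq] at hx hx'
        rcases hx with ⟨h1, h2⟩ | h1 <;> rcases hx' with ⟨h3, h4⟩ | h3
        · exact Set.disjoint_left.1 (hUV' i) h1 h3
        all_goals linarith)
    obtain ⟨s, hs⟩ := hj r hr
    refine ⟨s, Set.mem_iInter.2 fun i => ?_⟩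
    by_contra hsL
    rcases (hLe i ▸ hsL : s ∈ U i ∪ V i) with h | h
    · refine heO s j i false (hrO _ hs i false ⟨hUU i ⟨s, h, rfl⟩, ?_⟩)
      by_contra hcon
      exact Set.disjoint_left.1 (hUV i) h (hBV i (show 2/3 ≤ φ j i (e s) from not_lt.1 hcon))
    · refine heO s j i true (hrO _ hs i true ⟨hVV i ⟨s, h, rfl⟩, ?_⟩)
      by_contra hcon
      exact Set.disjoint_left.1 (hUV i) (hAU i (show φ j i (e s) ≤ 1/3 from not_lt.1 hcon)) h

/-! ### The construction -/

/-- In a set contained in all the folded partitions, two intersecting continua are comparable. -/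
lemma comparable_of_foldSep {M : Type} [TopologicalSpace M] [NormalSpace M] [T1Space M]
    {φ ψ : ℕ → M → ℝ} (hφ : ∀ k, Continuous (φ k))
    (hdense : ∀ h : M → ℝ, Continuous h → ∀ ε > 0, ∃ k, ∀ x, |ψ k x - h x| < ε)
    {P Q : Set M} (hPc : IsClosed P) (hQc : IsClosed Q) (hP : IsPreconnected P)
    (hQ : IsPreconnected Q) (hPQ : (P ∩ Q).Nonempty)
    (hP' : ∀ x ∈ P, ∀ k b, x ∉ foldSep (φ k) (ψ k) b)
    (hQ' : ∀ x ∈ Q, ∀ k b, x ∉ foldSep (φ k) (ψ k) b) : P ⊆ Q ∨ Q ⊆ P := by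
  by_contra! hcon
  obtain ⟨c, hc, hcQ⟩ := Set.not_subset.1 hcon.1
  obtain ⟨d, hd, hdP⟩ := Set.not_subset.1 hcon.2
  obtain ⟨s, hs0, hs1, hs⟩ := exists_continuous_zero_one_of_isClosed hQc
    (isClosed_singleton (x := c)) (Set.disjoint_singleton_right.2 hcQ)
  obtain ⟨r, hr0, hr1, hr⟩ := exists_continuous_zero_one_of_isClosed hPc
    (isClosed_singleton (x := d)) (Set.disjoint_singleton_right.2 hdP)
  obtain ⟨k, hk⟩ := hdense (fun x => (1 - s x + r x) / 2) (by fun_prop) (1/20) (by norm_num)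
  have hs0' : ∀ x ∈ Q, s x = 0 := hs0
  have hr0' : ∀ x ∈ P, r x = 0 := hr0
  have hs1' : s c = 1 := hs1 rfl
  have hr1' : r d = 1 := hr1 rfl
  refine foldSep_key (hφ k) hP hQ hPQ (fun x hx => hP' x hx k) (fun x hx => hQ' x hx k) hc hd
    ?_ ?_ ?_ ?_
  · have := abs_lt.1 (hk c)
    rw [hs1', hr0' c hc] at this
    linarith
  · have := abs_lt.1 (hk d)
    rw [hr1', hs0' d hd] at this
    linarith
  · intro x hx
    have := abs_lt.1 (hk x)
    rw [hr0' x hx] at this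
    linarith [(hs x).1]
  · intro x hx
    have := abs_lt.1 (hk x)
    rw [hs0' x hx] at this
    linarith [(hr x).1]

lemma exists_dense_functions (M : Type) [TopologicalSpace M] [CompactSpace M] [MetrizableSpace M] :
    ∃ ψ : ℕ → M → ℝ, (∀ k, Continuous (ψ k)) ∧
      ∀ h : M → ℝ, Continuous h → ∀ ε > 0, ∃ k, ∀ x, |ψ k x - h x| < ε := by
  refine ⟨fun k => denseSeq C(M, ℝ) k, fun k => ContinuousMap.continuous _, fun h hh ε hε => ?_⟩
  obtain ⟨k, hk⟩ := (denseRange_denseSeq C(M, ℝ)).exists_dist_lt ⟨h, hh⟩ hε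
  refine ⟨k, fun x => ?_⟩
  have := (ContinuousMap.dist_lt_iff hε).1 hk x
  rwa [dist_comm, Real.dist_eq] at this

/-- A power of a nondegenerate continuum contains a hereditarily indecomposable hereditarily
strongly infinite-dimensional Cantor manifold. -/
lemma exists_subset_pi (Z : Type) [TopologicalSpace Z] [CompactSpace Z] [MetrizableSpace Z]
    [PreconnectedSpace Z] [Nontrivial Z] :
    ∃ (J : Type) (X : Set (J → Z)), IsContinuum ↥X ∧ HereditarilyIndecomposable ↥X ∧
      IsHSIDCantorManifold ↥X := by
  let _ := metrizableSpaceMetric Z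
  obtain ⟨a, b, hab⟩ := exists_pair_ne Z
  obtain ⟨g, hg0, hg1, -⟩ := exists_continuous_zero_one_of_isClosed (isClosed_singleton (x := a))
    (isClosed_singleton (x := b)) (Set.disjoint_singleton.2 hab)
  let J : Type := ℕ ⊕ (ℕ × ℕ) ⊕ Fin 3
  let φ : J → (J → Z) → ℝ := fun j x => g (x j)
  have hφ : ∀ j, Continuous (φ j) := fun j => g.continuous.comp (continuous_apply j)
  have hess : EssFam φ := essFam_pi g a b (hg0 rfl) (hg1 rfl)
  obtain ⟨ψ, hψ, hdense⟩ := exists_dense_functions (J → Z)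
  have huniv := fun j => exists_universal_sep (φ := fun i => φ (.inr (.inl (j, i)))) (ψ := ψ j)
    (fun i => hφ _) (hψ j)
  choose O hO hOu using huniv
  let Y : Set (J → Z) := {x | (∀ k b, x ∉ foldSep (φ (.inl k)) (ψ k) b) ∧ ∀ j i b, x ∉ O j i b}
  have hY : IsClosed Y := by
    have e : Y = (⋂ k, ⋂ b, (foldSep (φ (.inl k)) (ψ k) b)ᶜ) ∩ ⋂ j, ⋂ i, ⋂ b, (O j i b)ᶜ := by
      ext x
      simp [Y]
    rw [e]
    exact (isClosed_iInter fun k => isClosed_iInter fun b =>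
      ((foldSep_sepBy (hφ _) (hψ k)).isOpen b).isClosed_compl).inter
      (isClosed_iInter fun j => isClosed_iInter fun i => isClosed_iInter fun b =>
        ((hO j i).isOpen b).isClosed_compl)
  let f : Fin 3 → (J → Z) → ℝ := fun l => φ (.inr (.inr l))
  have hf : ∀ l, Continuous (f l) := fun l => hφ _
  have hYess : EssOn f Y := by
    intro O3 hO3
    let OJ : J → Bool → Set (J → Z)
      | .inl k => foldSep (φ (.inl k)) (ψ k)
      | .inr (.inl (j, i)) => O j i
      | .inr (.inr l) => O3 l
    obtain ⟨x, hx⟩ := hess OJ (by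
      rintro (k | ⟨j, i⟩ | l)
      exacts [foldSep_sepBy (hφ _) (hψ k), hO j i, hO3 l])
    exact ⟨x, ⟨fun k => hx (.inl k), fun j i => hx (.inr (.inl (j, i)))⟩,
      fun l => hx (.inr (.inr l))⟩
  obtain ⟨X, hXY, hX, hXess, hmin⟩ := hYess.exists_minimal hY
  have : CompactSpace ↥X := isCompact_iff_compactSpace.1 hX.isCompact
  have : Nontrivial ↥X := (hXess.nontrivial hf).coe_sort
  have : PreconnectedSpace ↥X := by
    have := isPreconnected_diff_of_minimal hf hX hXess hmin isClosed_empty (Set.empty_subset X)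
      (covDimLE_of_isEmpty 0)
    rw [Set.sdiff_empty] at this
    exact Subtype.preconnectedSpace this
  have hcont : IsContinuum ↥X :=
    ⟨inferInstance, inferInstance, ⟨inferInstance⟩, inferInstance⟩
  have hdich : ∀ S : Set ↥X, CovDimLE ↥S 0 ∨ StronglyInfiniteDimensional ↥S := fun S =>
    covDimLE_zero_or_stronglyInfiniteDimensional (φ := fun j i => φ (.inr (.inl (j, i))))
      (fun j i => hφ _) hψ hdense hOu
      (IsEmbedding.subtypeVal.comp IsEmbedding.subtypeVal : IsEmbedding fun s : ↥S => s.1.1)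
      fun s => (hXY s.1.2).2
  have hdim0 : ∀ S : Set ↥X, ∀ n, CovDimLE ↥S n → CovDimLE ↥S 0 := fun S n hn =>
    (hdich S).resolve_right fun h => h.not_covDimLE n hn
  have huniv0 : ¬ CovDimLE ↥(Set.univ : Set ↥X) 0 := fun h =>
    not_covDimLE_zero (h.of_homeomorph (Homeomorph.Set.univ ↥X))
  refine ⟨J, X, hcont, ?_, ⟨hcont, ?_, ?_⟩, hdich⟩
  · rintro S hS ⟨A, B, hA, hB, hAS, hBS, hAne, hBne, hAB⟩
    have hne : (A ∩ B).Nonempty := by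
      obtain ⟨p, hp⟩ := hA.2.nonempty
      obtain ⟨q, hq⟩ := hB.2.nonempty
      obtain ⟨x, -, hx⟩ := isPreconnected_closed_iff.1 hS.2.isPreconnected A B hA.1.isClosed
        hB.1.isClosed hAB.ge ⟨p, hAS hp, hp⟩ ⟨q, hBS hq, hq⟩
      exact ⟨x, hx⟩
    have hval : Continuous (Subtype.val : ↥X → J → Z) := continuous_subtype_val
    have hmem : ∀ C : Set ↥X, ∀ x ∈ Subtype.val '' C, x ∈ Y := by
      rintro C _ ⟨x, -, rfl⟩
      exact hXY x.2
    rcases comparable_of_foldSep (φ := fun k => φ (.inl k)) (fun k => hφ _) hdense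
      (hA.1.image hval).isClosed (hB.1.image hval).isClosed
      (hA.2.isPreconnected.image _ hval.continuousOn)
      (hB.2.isPreconnected.image _ hval.continuousOn)
      (hne.image Subtype.val |>.mono (Set.image_inter_subset _ A B))
      (fun x hx => (hmem A x hx).1) (fun x hx => (hmem B x hx).1) with h | h
    · rw [Set.image_subset_image_iff Subtype.val_injective] at h
      exact hBne (by rw [← hAB, Set.union_eq_self_of_subset_left h])
    · rw [Set.image_subset_image_iff Subtype.val_injective] at h
      exact hAne (by rw [← hAB, Set.union_eq_self_of_subset_right h])
  · exact fun n hn => huniv0 (hdim0 _ n (hn.of_homeomorph (Homeomorph.Set.univ ↥X).symm))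
  · intro L hL hLc n hn
    have h0 := hdim0 L n hn
    apply hLc
    constructor
    · rw [Set.nonempty_compl]
      rintro rfl
      exact huniv0 h0
    · have h := isPreconnected_diff_of_minimal hf hX hXess hmin
        (hX.isClosedEmbedding_subtypeVal.isClosedMap L hL) (Subtype.coe_image_subset X L)
        (h0.of_homeomorph (IsEmbedding.subtypeVal.homeomorphImage L))
      rw [← IsInducing.subtypeVal.isPreconnected_image]
      convert h using 1
      ext x
      simp

theorem stmt_1 (W : Type) [TopologicalSpace W] (hW : IsContinuum W) (hWnd : Nontrivial W)
    (hexists : ∃ What : TopSpace, IsContinuum What.carrier ∧ Nontrivial What.carrier ∧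
      ∀ S : Set What.carrier, IsSubcontinuum S → S.Nontrivial →
        ∃ f : ↥S → W, Continuous f ∧ Function.Surjective f) :
    ∃ X : TopSpace, IsContinuum X.carrier ∧ HereditarilyIndecomposable X.carrier ∧
      IsHSIDCantorManifold X.carrier ∧
      ∀ S : Set X.carrier, IsSubcontinuum S → S.Nontrivial →
        ∃ f : ↥S → W, Continuous f ∧ Function.Surjective f := by
  obtain ⟨Z, ⟨hZne, hZc, hZcon, hZm⟩, hZnt, hZmap⟩ := hexists
  obtain ⟨J, X, hX1, hX2, hX3⟩ := exists_subset_pi Z.carrier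
  refine ⟨⟨↥X⟩, hX1, hX2, hX3, fun S hS hSn => ?_⟩
  obtain ⟨p, hp, q, hq, hpq⟩ := hSn
  obtain ⟨j, hj⟩ : ∃ j, p.1 j ≠ q.1 j := by
    by_contra! h
    exact hpq (Subtype.ext (funext h))
  let π : ↥X → Z.carrier := fun x => x.1 j
  have hπ : Continuous π := (continuous_apply j).comp continuous_subtype_val
  obtain ⟨f, hf, hfs⟩ := hZmap (π '' S) ⟨hS.1.image hπ, hS.2.image π hπ.continuousOn⟩
    ⟨_, ⟨p, hp, rfl⟩, _, ⟨q, hq, rfl⟩, hj⟩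
  refine ⟨fun s => f ⟨π s.1, s.1, s.2, rfl⟩,
    hf.comp ((hπ.comp continuous_subtype_val).subtype_mk _), fun w => ?_⟩
  obtain ⟨⟨_, s, hs, rfl⟩, h⟩ := hfs w
  exact ⟨⟨s, hs⟩, h⟩
end

section
/- Let X and A be hereditarily indecomposable continua and a ∈ X. If M is a continuum and p : M → X is a continuous surjection such that p⁻¹(a) is a terminal subcontinuum of M homeomorphic to A, and the restriction of p to p⁻¹(X∖{a}) is a homeomorphism onto X∖{a}, then M is hereditarily indecomposable. -/
/-!
Let `F = p ⁻¹' {a}` and suppose a subcontinuum `S` of `M` is the union of two subcontinua `P`, `Q`.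
If `S ⊆ F`, the decomposition lives in a copy of the hereditarily indecomposable continuum `A`, so
it is trivial (`IsSubcontinuum.indecomposable_of_subset_range`). Otherwise `p '' S` is the union of
the subcontinua `p '' P` and `p '' Q` of `X`, so one of them, say `p '' P`, equals `p '' S`. Off `F`
the map `p` is injective, so `P` and `S` agree there; if moreover `S` meets `F`, then `P` meets both
`F` and its complement, so `F ⊆ P` by terminality. Either way `P = S`
(`IsSubcontinuum.eq_of_image_eq`).
-/

open Set Topology TopologicalSpace

universe u v

theorem IsSubcontinuum.image {X : Type u} {Y : Type v} [TopologicalSpace X] [TopologicalSpace Y]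
    {f : X → Y} (hf : Continuous f) {S : Set X} (hS : IsSubcontinuum S) :
    IsSubcontinuum (f '' S) :=
  ⟨hS.1.image hf, hS.2.image f hf.continuousOn⟩

theorem IsSubcontinuum.preimage_of_isEmbedding {X : Type u} {Y : Type v} [TopologicalSpace X]
    [TopologicalSpace Y] {g : X → Y} (hg : IsEmbedding g) {S : Set Y} (hS : IsSubcontinuum S)
    (hSg : S ⊆ range g) : IsSubcontinuum (g ⁻¹' S) := by
  have him : g '' (g ⁻¹' S) = S := image_preimage_eq_of_subset hSg
  refine ⟨hg.isInducing.isCompact_iff.2 (him.symm ▸ hS.1), ?_, ?_⟩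
  · exact hS.2.nonempty.preimage' hSg
  · exact hg.isInducing.isPreconnected_image.1 (him.symm ▸ hS.2.isPreconnected)

/-- A subcontinuum contained in an embedded copy of a hereditarily indecomposable space is
indecomposable. -/
theorem IsSubcontinuum.indecomposable_of_subset_range {X : Type u} {Y : Type v}
    [TopologicalSpace X] [TopologicalSpace Y] {g : X → Y} (hg : IsEmbedding g)
    (hX : HereditarilyIndecomposable X) {S : Set Y} (hS : IsSubcontinuum S)
    (hSg : S ⊆ range g) : IsIndecomposableSet S := by
  rintro ⟨P, Q, hP, hQ, hPS, hQS, hPne, hQne, hPQ⟩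
  have ne {R : Set Y} (hR : R ⊆ S) (hne : R ≠ S) : g ⁻¹' R ≠ g ⁻¹' S := fun h =>
    hne ((preimage_eq_preimage' (hR.trans hSg) hSg).1 h)
  refine hX _ (hS.preimage_of_isEmbedding hg hSg)
    ⟨g ⁻¹' P, g ⁻¹' Q, hP.preimage_of_isEmbedding hg (hPS.trans hSg),
      hQ.preimage_of_isEmbedding hg (hQS.trans hSg), preimage_mono hPS, preimage_mono hQS,
      ne hPS hPne, ne hQS hQne, ?_⟩
  rw [← preimage_union, hPQ]

/-- If `p` is injective off a terminal fiber, then a subcontinuum `P` of a set `S` not contained in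
that fiber is determined by its image: `p '' P = p '' S` forces `P = S`. -/
theorem IsSubcontinuum.eq_of_image_eq {M : Type u} {X : Type v} [TopologicalSpace M]
    {p : M → X} {a : X} (hterm : IsTerminalSubcontinuum (p ⁻¹' ({a} : Set X)))
    (hinj : ∀ x y : M, p x ≠ a → p x = p y → x = y) {P S : Set M} (hP : IsSubcontinuum P)
    (hPS : P ⊆ S) (hS : ¬ S ⊆ p ⁻¹' ({a} : Set X)) (him : p '' P = p '' S) : P = S := by
  refine hPS.antisymm fun x hx => ?_
  have lift : ∀ z ∈ S, ∃ y ∈ P, p y = p z := fun z hz =>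
    him.symm.subset (mem_image_of_mem p hz)
  obtain ⟨y, hyP, hyx⟩ := lift x hx
  by_cases hxa : p x = a
  · obtain ⟨z, hzS, hza⟩ := not_subset.1 hS
    obtain ⟨w, hwP, hwz⟩ := lift z hzS
    exact hterm.2 P hP ⟨y, hyP, hyx.trans hxa⟩ ⟨w, hwP, fun hw => hza (hwz.symm.trans hw)⟩ hxa
  · exact hinj x y hxa hyx.symm ▸ hyP

theorem stmt_2 {X A M : Type u} [TopologicalSpace X] [TopologicalSpace A] [TopologicalSpace M]
    (hX : IsContinuum X) (hA : IsContinuum A)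
    (hXHI : HereditarilyIndecomposable X) (hAHI : HereditarilyIndecomposable A)
    (a : X) (hM : IsContinuum M) (p : M → X) (hp : Continuous p)
    (hsurj : Function.Surjective p)
    (hterm : IsTerminalSubcontinuum (p ⁻¹' ({a} : Set X)))
    (hfib : Nonempty (↥(p ⁻¹' ({a} : Set X)) ≃ₜ A))
    (hrest : IsHomeomorph (Set.restrictPreimage ({a}ᶜ : Set X) p)) :
    HereditarilyIndecomposable M := by
  intro S hS
  by_cases hSF : S ⊆ p ⁻¹' ({a} : Set X)
  · obtain ⟨e⟩ := hfib
    refine hS.indecomposable_of_subset_range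
      (IsEmbedding.subtypeVal.comp e.symm.isEmbedding) hAHI ?_
    rwa [e.symm.surjective.range_comp, Subtype.range_coe]
  have hinj : ∀ x y : M, p x ≠ a → p x = p y → x = y := fun x y hx hxy =>
    congrArg Subtype.val
      (@IsHomeomorph.injective _ _ _ _ _ hrest ⟨x, hx⟩ ⟨y, fun hy => hx (hxy.trans hy)⟩
        (Subtype.ext hxy))
  rintro ⟨P, Q, hP, hQ, hPS, hQS, hPne, hQne, hPQ⟩
  exact hXHI _ (hS.image hp) ⟨p '' P, p '' Q, hP.image hp, hQ.image hp,
    image_mono hPS, image_mono hQS,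
    fun h => hPne (hP.eq_of_image_eq hterm hinj hPS hSF h),
    fun h => hQne (hQ.eq_of_image_eq hterm hinj hQS hSF h), by rw [← image_union, hPQ]⟩
end

section
/- Let X be a continuum, let (K_i)_{i∈ℕ} be a sequence of continua such that K_i does not embed in K_j for i ≠ j and no K_i embeds in X, and let (a_i)_{i∈ℕ} be a sequence of distinct points of X whose set A = {a_i : i ∈ ℕ} is dense in X. Let Y be a continuum and p : Y → X an atomic continuous surjection such that for each i the fiber p⁻¹(a_i) is a boundary set in Y homeomorphic to K_i, and the restriction of p to p⁻¹(X∖A) is a homeomorphism onto X∖A. Then Y is strongly chaotic. -/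
/-!
Suppose `h : U ≃ₜ V` with `U` nonempty open and `V` disjoint from `U`. The fibers over the `a i` are
closed with empty interior, so by Baire `U` has a point `y` with `p y` outside the range of `a`. The
fiber of `y` is `{y} ⊆ U`; as `p` is closed and `range a` is dense, some whole fiber
`F i = p ⁻¹' {a i}` lies in `U` (`exists_fiber_subset`).

Consider the subcontinuum `C = h (F i)` of `V`, a copy of `K i` disjoint from `F i`. If `p` maps `C`
off `range a`, then `p` embeds `C` in `X`, which is excluded. Otherwise `C` meets some `F j`, and
since `F j` is terminal, `C ⊆ F j` or `F j ⊆ C`. Either way one of `K i`, `K j` embeds in the other,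
so `i = j`, and `C` meets `F i`, a contradiction.
-/

open Set Topology TopologicalSpace

universe u v

theorem exists_isEmbedding_of_range_subset {A B Z : Type*} [TopologicalSpace A]
    [TopologicalSpace B] [TopologicalSpace Z] {f : A → Z} {g : B → Z}
    (hf : IsEmbedding f) (hg : IsEmbedding g) (h : range f ⊆ range g) :
    ∃ k : A → B, IsEmbedding k := by
  choose k hk using fun x => h (mem_range_self x)
  have hgk : g ∘ k = f := funext hk
  have hkc : Continuous k := hg.continuous_iff.2 (hgk ▸ hf.continuous)
  exact ⟨k, .of_comp hkc hg.continuous (hgk ▸ hf)⟩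

/-- Passing from spaces homeomorphic to `K`, `L` to `K`, `L` themselves. -/
theorem embedsIn_of_range_subset {A B Z : Type*} {K L : Type*} [TopologicalSpace A]
    [TopologicalSpace B] [TopologicalSpace Z] [TopologicalSpace K] [TopologicalSpace L]
    {f : A → Z} {g : B → Z} (hf : IsEmbedding f) (hg : IsEmbedding g) (h : range f ⊆ range g)
    (e : A ≃ₜ K) (e' : B ≃ₜ L) : EmbedsIn K L := by
  obtain ⟨k, hk⟩ := exists_isEmbedding_of_range_subset hf hg h
  exact ⟨_, e'.isEmbedding.comp (hk.comp e.symm.isEmbedding)⟩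

/-- Every nonempty open `U` contains a whole fiber over a point of the dense sequence `a`, by Baire
category and closedness of `p`. -/
theorem exists_fiber_subset {X Y : Type*} [TopologicalSpace X] [TopologicalSpace Y]
    [T2Space X] [T2Space Y] [CompactSpace Y] {a : ℕ → X} (hdense : Dense (range a)) {p : Y → X}
    (hp : Continuous p)
    (hint : ∀ i, interior (p ⁻¹' ({a i} : Set X)) = ∅)
    (hinj : Function.Injective (Set.restrictPreimage ((range a)ᶜ : Set X) p))
    {U : Set Y} (hU : IsOpen U) (hUne : U.Nonempty) : ∃ i, p ⁻¹' {a i} ⊆ U := by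
  have hG : Dense (⋂ i, (p ⁻¹' ({a i} : Set X))ᶜ) :=
    dense_iInter_of_isOpen (fun i => (isClosed_singleton.preimage hp).isOpen_compl)
      fun i => interior_eq_empty_iff_dense_compl.1 (hint i)
  obtain ⟨y, hyU, hy⟩ := hG.inter_open_nonempty U hU hUne
  have hyA : p y ∈ (range a)ᶜ := by
    rintro ⟨i, hi⟩
    exact mem_iInter.1 hy i hi.symm
  -- The points of `X` whose whole fiber lies in `U` form an open set, which contains `p y`.
  have hW : IsOpen (p '' Uᶜ)ᶜ := (hp.isClosedMap _ hU.isClosed_compl).isOpen_compl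
  have hyW : p y ∈ (p '' Uᶜ)ᶜ := by
    rintro ⟨z, hzU, hz⟩
    have hzy : (⟨z, by rwa [mem_preimage, hz]⟩ : p ⁻¹' (range a)ᶜ) = ⟨y, hyA⟩ :=
      hinj (Subtype.ext hz)
    have hzy' : z = y := congrArg Subtype.val hzy
    exact hzU (hzy' ▸ hyU)
  obtain ⟨_, hxW, i, rfl⟩ := hdense.inter_open_nonempty _ hW ⟨_, hyW⟩
  exact ⟨i, fun z hz => by_contra fun hzU => hxW ⟨z, hzU, hz⟩⟩

theorem stmt_4 {X Y : Type u} [TopologicalSpace X] [TopologicalSpace Y]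
    (hX : IsContinuum X) (hY : IsContinuum Y)
    (K : ℕ → Type v) [∀ i, TopologicalSpace (K i)] (hK : ∀ i, IsContinuum (K i))
    (hKK : ∀ i j, i ≠ j → ¬ EmbedsIn (K i) (K j))
    (hKX : ∀ i, ¬ EmbedsIn (K i) X)
    (a : ℕ → X) (ha : Function.Injective a) (hdense : Dense (Set.range a))
    (p : Y → X) (hsurj : Function.Surjective p) (hatomic : IsAtomicMap p)
    (hfib : ∀ i, interior (p ⁻¹' ({a i} : Set X)) = ∅ ∧
      Nonempty (↥(p ⁻¹' ({a i} : Set X)) ≃ₜ K i))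
    (hrest : IsHomeomorph (Set.restrictPreimage ((Set.range a)ᶜ : Set X) p)) :
    StronglyChaotic Y := by
  obtain ⟨-, -, -, _⟩ := hX
  obtain ⟨-, _, -, _⟩ := hY
  intro U V hUV hUne hU
  refine ⟨fun h => ?_⟩
  obtain ⟨hp, hterm⟩ := hatomic
  obtain ⟨i, hi⟩ := exists_fiber_subset hdense hp (fun i => (hfib i).1) hrest.injective
    hU hUne
  have e : ∀ j, ↥(p ⁻¹' ({a j} : Set X)) ≃ₜ K j := fun j => (hfib j).2.some
  -- `g` is `h` restricted to the fiber over `a i`, so `range g` is the copy `C` of `K i`.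
  let g : ↥(p ⁻¹' ({a i} : Set X)) → Y := fun z => h (inclusion hi z)
  have hg : IsEmbedding g :=
    IsEmbedding.subtypeVal.comp (h.isEmbedding.comp (IsEmbedding.inclusion hi))
  have hgU : ∀ z, g z ∉ U := fun z hz =>
    disjoint_left.1 hUV hz (h (inclusion hi z)).2
  have hC : IsSubcontinuum (range g) := by
    have h1 := (hterm (a i)).1
    have _ : CompactSpace ↥(p ⁻¹' ({a i} : Set X)) := isCompact_iff_compactSpace.1 h1.1
    have _ : ConnectedSpace ↥(p ⁻¹' ({a i} : Set X)) := isConnected_iff_connectedSpace.1 h1.2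
    exact ⟨isCompact_range hg.continuous, isConnected_range hg.continuous⟩
  by_cases hA : ∃ z j, p (g z) = a j
  · obtain ⟨z, j, hz⟩ := hA
    by_cases hsub : range g ⊆ p ⁻¹' {a j}
    · obtain rfl : i = j := by_contra fun hij => hKK i j hij <|
        embedsIn_of_range_subset hg IsEmbedding.subtypeVal (by rwa [Subtype.range_coe]) (e i) (e j)
      exact hgU z (hi hz)
    · obtain ⟨w, hw, hw'⟩ := not_subset.1 hsub
      have hsup := (hterm (a j)).2 _ hC ⟨g z, mem_range_self z, hz⟩ ⟨w, hw, hw'⟩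
      obtain rfl : j = i := by_contra fun hij => hKK j i hij <|
        embedsIn_of_range_subset IsEmbedding.subtypeVal hg (by rwa [Subtype.range_coe]) (e j) (e i)
      obtain ⟨w, hw⟩ := hsup hz
      exact hgU w (hw ▸ hi hz)
  · push Not at hA
    have hsub : range g ⊆ range (Subtype.val : ↥(p ⁻¹' (range a)ᶜ) → Y) := by
      rintro _ ⟨z, rfl⟩
      rw [Subtype.range_coe]
      rintro ⟨j, hj⟩
      exact hA z j hj.symm
    obtain ⟨k, hk⟩ := exists_isEmbedding_of_range_subset hg IsEmbedding.subtypeVal hsub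
    exact hKX i ⟨_, IsEmbedding.subtypeVal.comp
      (hrest.isEmbedding.comp (hk.comp (e i).symm.isEmbedding))⟩
end

section
/- Let E be a strongly chaotic continuum, A a continuum such that no nonempty open subset of E embeds in A, and a ∈ E. Then every pseudosuspension M(E, A, a) of A over E at a is strongly chaotic. -/
/-!
Write `F` for the fiber `p ⁻¹ (a)`, a copy of `A`, so that `M ∖ F` is a copy of the open subset
`E ∖ {a}` of `E`.

The key point is that `F` has empty interior. Otherwise take an open nonempty `U ⊆ F` and a point
`y ∉ F` (one exists, since a one-point `E` would embed in `A`). By boundary bumping the component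
of `y` in `M ∖ U` reaches the closure of `U`, which lies in `F`; this component then meets both `F`
and its complement but does not contain `U ⊆ F`, contradicting terminality of `F`.

Now let `h : U ≃ V` be a homeomorphism with `U` open and nonempty and `V` disjoint from `U`. The set
`U ∖ F` is open and nonempty. If `h` maps it into `F`, then its image under `p` is an open subset of
`E` embedding in `A`. Otherwise the points of `U ∖ F` that `h` maps outside `F` form a nonempty open
set, and the images under `p` of this set and of its `h`-image contradict strong chaoticity of `E`.
-/

open Set Topology TopologicalSpace

universe u v

/-- Strong chaoticity in terms of maps: an open embedding and an embedding of the same nonempty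
space never have disjoint ranges. -/
theorem StronglyChaotic.false_of_embeddings {E : Type*} {Y : Type*} [TopologicalSpace E]
    [TopologicalSpace Y] [Nonempty Y] (hE : StronglyChaotic E) {i f : Y → E}
    (hi : IsOpenEmbedding i) (hf : IsEmbedding f) (hd : Disjoint (range i) (range f)) : False :=
  (hE _ _ hd (range_nonempty i) hi.isOpen_range).false
    (hi.isEmbedding.toHomeomorph.symm.trans hf.toHomeomorph)

/-- Boundary bumping: in a compact connected Hausdorff space, a point `y` off a nonempty open set
`U` is joined to the frontier of `U` by a subcontinuum missing `U`. -/
theorem exists_subcontinuum_meeting_frontier {M : Type*} [TopologicalSpace M] [CompactSpace M]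
    [T2Space M] [ConnectedSpace M] {U : Set M} (hU : IsOpen U) (hne : U.Nonempty) {y : M}
    (hy : y ∉ U) :
    ∃ C : Set M, IsSubcontinuum C ∧ y ∈ C ∧ Disjoint C U ∧ (C ∩ frontier U).Nonempty := by
  have hK : IsClosed (Uᶜ : Set M) := hU.isClosed_compl
  have : CompactSpace (Uᶜ : Set M) := isCompact_iff_compactSpace.mp hK.isCompact
  let y' : (Uᶜ : Set M) := ⟨y, hy⟩
  refine ⟨Subtype.val '' connectedComponent y', ⟨?_, ?_⟩, ⟨y', mem_connectedComponent, rfl⟩, ?_, ?_⟩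
  · exact isClosed_connectedComponent.isCompact.image continuous_subtype_val
  · exact isConnected_connectedComponent.image _ continuous_subtype_val.continuousOn
  · rw [Set.disjoint_left]
    rintro _ ⟨z, -, rfl⟩ hz
    exact z.2 hz
  by_contra hemp
  -- In a compact Hausdorff space components are intersections of clopen sets, so if the component
  -- missed the frontier, compactness would give a clopen subset of `Uᶜ` missing the frontier.
  obtain ⟨W, hW, hyW, hWd⟩ : ∃ W : Set (Uᶜ : Set M), IsClopen W ∧ y' ∈ W ∧
      W ⊆ Subtype.val ⁻¹' (frontier U)ᶜ := by
    have hsub : (⋂ s : { s : Set (Uᶜ : Set M) // IsClopen s ∧ y' ∈ s }, (s : Set (Uᶜ : Set M))) ⊆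
        Subtype.val ⁻¹' (frontier U)ᶜ := by
      rw [← connectedComponent_eq_iInter_isClopen]
      intro z hz hzf
      exact hemp ⟨z, ⟨z, hz, rfl⟩, hzf⟩
    have : Nonempty { s : Set (Uᶜ : Set M) // IsClopen s ∧ y' ∈ s } :=
      ⟨⟨univ, isClopen_univ, mem_univ _⟩⟩
    obtain ⟨s, hs⟩ := exists_subset_nhds_of_compactSpace
      (V := fun s : { s : Set (Uᶜ : Set M) // IsClopen s ∧ y' ∈ s } => (s : Set (Uᶜ : Set M)))
      (fun s t => ⟨⟨s.1 ∩ t.1, s.2.1.inter t.2.1, s.2.2, t.2.2⟩,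
        inter_subset_left, inter_subset_right⟩)
      (fun s => s.2.1.isClosed)
      (U := Subtype.val ⁻¹' (frontier U)ᶜ)
      (fun x hx => (isClosed_frontier.isOpen_compl.preimage continuous_subtype_val).mem_nhds
        (hsub hx))
    exact ⟨s.1, s.2.1, s.2.2, hs⟩
  -- Such a set is clopen in `M`, because it lies in the open set `(closure U)ᶜ`.
  have hclosed : IsClosed (Subtype.val '' W : Set M) := hK.isClosedMap_subtype_val _ hW.isClosed
  have hopen : IsOpen (Subtype.val '' W : Set M) := by
    obtain ⟨O, hO, rfl⟩ := isOpen_induced_iff.mp hW.isOpen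
    have : (Subtype.val '' (Subtype.val ⁻¹' O : Set (Uᶜ : Set M)) : Set M)
        = O ∩ (closure U)ᶜ := by
      ext z
      constructor
      · rintro ⟨z, hz, rfl⟩
        refine ⟨hz, fun hc => hWd hz ?_⟩
        rw [hU.frontier_eq]
        exact ⟨hc, z.2⟩
      · rintro ⟨hz, hc⟩
        exact ⟨⟨z, fun h => hc (subset_closure h)⟩, hz, rfl⟩
    rw [this]
    exact hO.inter isClosed_closure.isOpen_compl
  have huniv := IsClopen.eq_univ ⟨hclosed, hopen⟩ ⟨y, y', hyW, rfl⟩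
  obtain ⟨u, hu⟩ := hne
  obtain ⟨z, -, hz⟩ := huniv.symm ▸ mem_univ u
  exact z.2 (hz ▸ hu)

/-- A proper terminal subcontinuum has empty interior. -/
theorem IsTerminalSubcontinuum.not_subset_of_isOpen {M : Type*} [TopologicalSpace M]
    [CompactSpace M] [T2Space M] [ConnectedSpace M] {F U : Set M} (hF : IsTerminalSubcontinuum F)
    {y : M} (hy : y ∉ F) (hU : IsOpen U) (hne : U.Nonempty) : ¬ U ⊆ F := by
  intro hUF
  obtain ⟨C, hC, hyC, hCU, z, hzC, hz⟩ :=
    exists_subcontinuum_meeting_frontier hU hne (fun h => hy (hUF h))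
  have hzF : z ∈ F := closure_minimal hUF hF.1.1.isClosed hz.1
  obtain ⟨u, hu⟩ := hne
  exact Set.disjoint_left.mp hCU (hF.2 C hC ⟨z, hzC, hzF⟩ ⟨y, hyC, hy⟩ (hUF hu)) hu

theorem stmt_9 {E A : Type u} [TopologicalSpace E] [TopologicalSpace A]
    (hE : IsContinuum E) (hA : IsContinuum A) (hchaotic : StronglyChaotic E)
    (hnoemb : ∀ U : Set E, IsOpen U → U.Nonempty → ¬ EmbedsIn (↥U) A)
    (a : E) (M : Type v) [TopologicalSpace M] (p : M → E)
    (hps : IsPseudosuspension A a p) :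
    StronglyChaotic M := by
  obtain ⟨-, -, -, hmE⟩ := hE
  obtain ⟨⟨-, hcM, hconM, hmM⟩, hsurj, ⟨hpc, hterm⟩, ⟨eA⟩, hhom⟩ := hps
  intro U V hUV hUne hU
  refine ⟨fun h => ?_⟩
  have hnoemb' : ∀ (Y : Type v) [TopologicalSpace Y] [Nonempty Y] (i : Y → E) (j : Y → A),
      IsOpenEmbedding i → IsEmbedding j → False := fun Y _ _ i j hi hj =>
    hnoemb _ hi.isOpen_range (range_nonempty i)
      ⟨_, hj.comp hi.isEmbedding.toHomeomorph.symm.isEmbedding⟩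
  obtain ⟨y, hy⟩ : ∃ y, y ∉ p ⁻¹' {a} := by
    by_contra hall
    -- In this case `E` is a single point, and it embeds in the nonempty space `A`.
    push Not at hall
    have hsub : ∀ x : E, x = a := fun x => by
      obtain ⟨m, rfl⟩ := hsurj x
      exact hall m
    have : Subsingleton E := ⟨fun x z => (hsub x).trans (hsub z).symm⟩
    obtain ⟨b⟩ := hA.1
    exact hnoemb univ isOpen_univ ⟨a, mem_univ a⟩ ⟨fun _ => b, .of_subsingleton _⟩
  have hopenF : IsOpen (p ⁻¹' {a}ᶜ) := isOpen_compl_singleton.preimage hpc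
  let q : p ⁻¹' ({a}ᶜ : Set E) → E := fun z => p z
  have hq : IsOpenEmbedding q :=
    (isOpen_compl_singleton (x := a)).isOpenEmbedding_subtypeVal.comp hhom.isOpenEmbedding
  let Y₀ := ↥(U ∩ p ⁻¹' ({a}ᶜ : Set E))
  have : Nonempty Y₀ := by
    obtain ⟨u, hu, huF⟩ := not_subset.mp ((hterm a).not_subset_of_isOpen hy hU hUne)
    exact ⟨⟨u, hu, huF⟩⟩
  have hi : IsOpenEmbedding (fun z : Y₀ => q ⟨z, z.2.2⟩) :=
    hq.comp ((IsOpenEmbedding.of_comp_iff _ hopenF.isOpenEmbedding_subtypeVal).mp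
      (hU.inter hopenF).isOpenEmbedding_subtypeVal)
  let g : Y₀ → M := fun z => h ⟨z, z.2.1⟩
  have hg : IsEmbedding g :=
    IsEmbedding.subtypeVal.comp (h.isEmbedding.comp (IsEmbedding.inclusion inter_subset_left))
  have hgV : ∀ z, g z ∈ V := fun z => (h ⟨z, z.2.1⟩).2
  by_cases hcase : ∀ z, p (g z) = a
  · exact hnoemb' Y₀ _ (fun z => eA ⟨g z, hcase z⟩) hi
      (eA.isEmbedding.comp (hg.codRestrict (p ⁻¹' {a}) hcase))
  · push Not at hcase
    obtain ⟨z₀, hz₀⟩ := hcase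
    let Y₁ := ↥(g ⁻¹' (p ⁻¹' ({a}ᶜ : Set E)))
    have : Nonempty Y₁ := ⟨⟨z₀, hz₀⟩⟩
    have hemb : IsEmbedding (fun z : Y₁ => q ⟨g z, z.2⟩) :=
      hq.isEmbedding.comp ((hg.comp IsEmbedding.subtypeVal).codRestrict _ fun z : Y₁ => z.2)
    refine hchaotic.false_of_embeddings
      (hi.comp (hopenF.preimage hg.continuous).isOpenEmbedding_subtypeVal) hemb ?_
    rw [Set.disjoint_left]
    rintro _ ⟨z, rfl⟩ ⟨w, hw⟩
    have heq : g w = (z.1 : M) := congrArg Subtype.val (hq.injective hw)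
    exact Set.disjoint_left.mp hUV z.1.2.1 (heq ▸ hgV w)
end

section
/- Let W = L ∪ S be a compactification of the ray with ray part L and remainder S. Let X and A be continua, a ∈ X, and f : A → W a continuous surjection. Suppose there exists an increasing sequence A₁ ⊆ A₂ ⊆ … of subcontinua of A, each contained in f⁻¹(L), whose union is dense in A. Then there exists a pseudosuspension M of A over X at a that admits a continuous surjection onto W. -/
/-!
The space `M` is the graph of a ray spiralling onto a copy of `A`.

Embed `A` isometrically in the Banach space `E = ℓ^∞(ℕ)` by `e`, and let `Y = E × W` and
`G = (e, f) : A → Y`, an embedding.  If a continuous `ψ : [0, ∞) → Y` has the image of `G` as its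
set of cluster values at infinity and approaches that image, then
`M = {(x, ψ (1 / d(x, a))) | x ≠ a} ∪ {a} × G(A) ⊆ X × Y` is compact, and its projection to `X` is
the required atomic map: a subcontinuum meeting both the fibre over `a` and its complement sees all
small values of `d(x, a)`, so it contains points over `a` for every cluster value of `ψ`.
The projection of `M` to `W` extends `f`, so it is onto.

To produce `ψ`, parametrize the ray `L` and extend the parametrization to `r : ℝ → W`.  The map
`Φ = (id, r) : E × ℝ → Y` is continuous, and `G` lifts through `Φ` on `f⁻¹(L)`, hence on each `Aᵢ`.
The set of points that `Φ` sends within `ε` of `G(A)` is open in the locally path-connected space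
`E × ℝ` and contains the lift of the connected set `Aᵢ`, so any two points of `G(Aᵢ)` are joined by
a path within `ε` of `G(A)` (`exists_path_near`).  Concatenating such paths, with `ε → 0`, through a
sequence that visits each point of a countable dense subset of `⋃ Aᵢ` infinitely often gives `ψ`
(`exists_spiral`).
-/

open Set Topology TopologicalSpace

universe u v

open Filter Metric
open scoped NNReal unitInterval lp ENNReal

/-! ### Rays approaching a compact set -/

/-- Countably many consecutive paths concatenate to a map on `[0, ∞)`, the `n`-th path being run
through on `[n, n + 1]`. -/
theorem exists_concat {Y : Type*} [TopologicalSpace Y] (y : ℕ → Y)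
    (γ : ∀ n, Path (y n) (y (n + 1))) :
    ∃ ψ : ℝ≥0 → Y, Continuous ψ ∧ (∀ n : ℕ, ψ n = y n) ∧ ∀ s, ψ s ∈ range (γ ⌊s⌋₊) := by
  refine ⟨fun s => (γ ⌊s⌋₊).extend ((s : ℝ) - ⌊s⌋₊), ?_, ?_, ?_⟩
  · refine LocallyFinite.continuous (f := fun n : ℕ => Icc (n : ℝ≥0) (n + 1)) ?_ ?_
      (fun _ => isClosed_Icc) ?_
    · intro s
      refine ⟨Iio (s + 1), Iio_mem_nhds (by simp), (finite_Iio (⌈s + 1⌉₊)).subset ?_⟩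
      rintro n ⟨t, ht, hts⟩
      exact Nat.lt_ceil.2 (ht.1.trans_lt hts)
    · refine eq_univ_of_forall fun s => mem_iUnion.2 ⟨⌊s⌋₊, Nat.floor_le (zero_le), ?_⟩
      exact (Nat.lt_floor_add_one s).le
    · intro n
      have hc : Continuous fun s : ℝ≥0 => (γ n).extend ((s : ℝ) - n) := by fun_prop
      refine hc.continuousOn.congr fun s hs => ?_
      rcases hs.2.lt_or_eq with h | h
      · have : ⌊s⌋₊ = n := (Nat.floor_eq_iff (zero_le)).2 ⟨hs.1, h⟩
        change (γ ⌊s⌋₊).extend ((s : ℝ) - ⌊s⌋₊) = _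
        rw [this]
      · have hfl : ⌊s⌋₊ = n + 1 := by rw [h, ← Nat.cast_succ, Nat.floor_natCast]
        change (γ ⌊s⌋₊).extend ((s : ℝ) - ⌊s⌋₊) = _
        rw [hfl]
        simp [h]
  · intro n
    simp only [Nat.floor_natCast]
    simp
  · intro s
    rw [← Path.extend_range]
    exact mem_range_self _

/-- If a map from a locally path-connected space sends a preconnected set `K` into `R`, then the
images of any two points of `K` are joined by a path within `ε` of `R`. -/
theorem exists_path_near {N Y : Type*} [TopologicalSpace N] [LocallyPathConnectedSpace N]
    [PseudoMetricSpace Y] {Φ : N → Y} (hΦ : Continuous Φ) {K : Set N} (hK : IsPreconnected K)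
    {R : Set Y} (hKR : MapsTo Φ K R) {ε : ℝ} (hε : 0 < ε) {u v : N} (hu : u ∈ K) (hv : v ∈ K) :
    ∃ γ : Path (Φ u) (Φ v), ∀ t, infDist (γ t) R < ε := by
  set V : Set N := {z | infDist (Φ z) R < ε} with hV
  have hVo : IsOpen V := isOpen_lt ((continuous_infDist_pt R).comp hΦ) continuous_const
  have hKV : K ⊆ V := fun z hz => by simpa [hV, infDist_zero_of_mem (hKR hz)] using hε
  have hC : IsPathConnected (connectedComponentIn V u) :=
    hVo.connectedComponentIn.isConnected_iff_isPathConnected.1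
      (isConnected_connectedComponentIn_iff.2 (hKV hu))
  have hKC := hK.subset_connectedComponentIn hu hKV
  obtain ⟨δ, hδ⟩ := hC.joinedIn u (hKC hu) v (hKC hv)
  exact ⟨δ.map hΦ, fun t => connectedComponentIn_subset V u (hδ t)⟩

/-- A ray in `Y` that approaches the image of `G` and accumulates at each of its points. -/
theorem exists_spiral {A Y : Type*} [TopologicalSpace A] [SecondCountableTopology A]
    [PseudoMetricSpace Y] {G : A → Y} (hG : Continuous G) {S : ℕ → Set A} (hmono : Monotone S)
    (hne : (S 0).Nonempty) (hdense : Dense (⋃ i, S i))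
    (hpath : ∀ i, ∀ u ∈ S i, ∀ v ∈ S i, ∀ ε : ℝ, 0 < ε →
      ∃ γ : Path (G u) (G v), ∀ t, infDist (γ t) (range G) < ε) :
    ∃ ψ : ℝ≥0 → Y, Continuous ψ ∧ Tendsto (fun s => infDist (ψ s) (range G)) atTop (𝓝 0) ∧
      ∀ b, MapClusterPt (G b) atTop ψ := by
  have : Nonempty (⋃ i, S i : Set A) := (hne.mono (subset_iUnion S 0)).to_subtype
  let u : ℕ → A := fun n => (denseSeq (⋃ i, S i : Set A) n : A)
  have hu : DenseRange u :=
    hdense.denseRange_val.comp (denseRange_denseSeq _) continuous_subtype_val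
  have huS : ∀ n, ∃ i, u n ∈ S i := fun n => mem_iUnion.1 (denseSeq (⋃ i, S i : Set A) n).2
  choose j hj using huS
  -- `b` takes each value `u k` at the infinitely many indices `Nat.pair k m`.
  let b : ℕ → A := fun n => u n.unpair.1
  have hstep : ∀ n, ∃ γ : Path (G (b n)) (G (b (n + 1))),
      ∀ t, infDist (γ t) (range G) < 1 / ((n : ℝ) + 1) := fun n =>
    hpath (j n.unpair.1 + j (n + 1).unpair.1) _ (hmono (Nat.le_add_right _ _) (hj _))
      _ (hmono (Nat.le_add_left _ _) (hj _)) _ (by positivity)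
  choose γ hγ using hstep
  obtain ⟨ψ, hψc, hψn, hψr⟩ := exists_concat (fun n => G (b n)) γ
  refine ⟨ψ, hψc, ?_, fun x => ?_⟩
  · refine squeeze_zero (fun _ => infDist_nonneg) (fun s => ?_)
      (tendsto_one_div_add_atTop_nhds_zero_nat.comp (tendsto_nat_floor_atTop (α := ℝ≥0)))
    obtain ⟨t, ht⟩ := hψr s
    rw [← ht]
    exact (hγ _ t).le
  · rw [mapClusterPt_iff_frequently]
    intro s hs
    obtain ⟨k, hk⟩ := hu.exists_mem_open isOpen_interior
      ⟨x, mem_interior_iff_mem_nhds.2 (hG.continuousAt hs)⟩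
    refine frequently_atTop.2 fun t => ⟨(Nat.pair k ⌈t⌉₊ : ℕ), ?_, ?_⟩
    · exact (Nat.le_ceil t).trans (by exact_mod_cast Nat.right_le_pair _ _)
    · rw [hψn]
      simpa [b] using interior_subset hk

/-! ### Compactness of the spiral graph -/

/-- The graph over `X ∖ {a}` of `x ↦ ψ (1 / d(x, a))`, together with the copy `{a} × R` of `R`. -/
def spiralGraph {X Y : Type*} [PseudoMetricSpace X] (a : X) (ψ : ℝ≥0 → Y) (R : Set Y) :
    Set (X × Y) :=
  {m | (m.1 ≠ a ∧ m.2 = ψ (nndist m.1 a)⁻¹) ∨ (m.1 = a ∧ m.2 ∈ R)}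

theorem tendsto_inv_nndist {X ι : Type*} [MetricSpace X] {a : X} {F : Filter ι} {x : ι → X}
    (hx : Tendsto x F (𝓝 a)) (hne : ∀ᶠ i in F, x i ≠ a) :
    Tendsto (fun i => (nndist (x i) a)⁻¹) F atTop := by
  refine tendsto_inv_nhdsGT_zero.comp (tendsto_nhdsWithin_iff.2 ⟨?_, ?_⟩)
  · simpa using hx.nndist (tendsto_const_nhds (x := a))
  · filter_upwards [hne] with i hi
    exact pos_iff_ne_zero.2 (nndist_eq_zero.not.2 hi)

theorem isCompact_spiralGraph {X Y : Type*} [MetricSpace X] [CompactSpace X]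
    [PseudoMetricSpace Y] (a : X) {ψ : ℝ≥0 → Y} (hψ : Continuous ψ) {R : Set Y}
    (hR : IsCompact R) (hRne : R.Nonempty)
    (hlim : Tendsto (fun s => infDist (ψ s) R) atTop (𝓝 0)) :
    IsCompact (spiralGraph a ψ R) := by
  rw [isCompact_iff_ultrafilter_le_nhds]
  intro F hF
  have hF' : ∀ᶠ m in (F : Filter (X × Y)), m ∈ spiralGraph a ψ R := le_principal_iff.1 hF
  obtain ⟨x, -, hx⟩ := isCompact_univ.ultrafilter_le_nhds (F.map Prod.fst) (by simp)
  have hx : Tendsto Prod.fst (F : Filter (X × Y)) (𝓝 x) := hx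
  by_cases hxa : x = a
  · subst hxa
    have hd : Tendsto (fun m : X × Y => infDist m.2 R) F (𝓝 0) := by
      rcases F.em (fun m => m.1 = x) with h | h
      · refine tendsto_const_nhds.congr' ?_
        filter_upwards [h, hF'] with m hm hm'
        rcases hm' with h' | h'
        · exact absurd hm h'.1
        · exact (infDist_zero_of_mem h'.2).symm
      · refine (hlim.comp (tendsto_inv_nndist hx h)).congr' ?_
        filter_upwards [h, hF'] with m hm hm'
        rcases hm' with h' | h'
        · simp [h'.2]
        · exact absurd h'.1 hm
    -- Replace second coordinates by nearest points of `R`, which converge by compactness.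
    choose c hcR hc using fun y => hR.exists_infDist_eq_dist hRne y
    obtain ⟨z, hzR, hz⟩ := hR.ultrafilter_le_nhds (F.map fun m => c m.2)
      (le_principal_iff.2 (Eventually.of_forall (f := (F : Filter (X × Y))) fun m => hcR m.2))
    have hz : Tendsto (fun m : X × Y => c m.2) F (𝓝 z) := hz
    refine ⟨(x, z), Or.inr ⟨rfl, hzR⟩, ?_⟩
    have h2 : Tendsto Prod.snd (F : Filter (X × Y)) (𝓝 z) := by
      refine (tendsto_iff_of_dist ?_).2 hz
      exact hd.congr fun m => hc m.2
    exact hx.prodMk_nhds h2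
  · have hne : ∀ᶠ m in (F : Filter (X × Y)), m.1 ≠ a := hx.eventually_ne hxa
    refine ⟨(x, ψ (nndist x a)⁻¹), Or.inl ⟨hxa, rfl⟩, ?_⟩
    have h2 : Tendsto Prod.snd (F : Filter (X × Y)) (𝓝 (ψ (nndist x a)⁻¹)) := by
      refine ((hψ.tendsto _).comp ((hx.nndist tendsto_const_nhds).inv₀
        (nndist_eq_zero.not.2 hxa))).congr' ?_
      filter_upwards [hne, hF'] with m hm hm'
      rcases hm' with h' | h'
      · simp [h'.2]
      · exact absurd h'.1 hm
    exact hx.prodMk_nhds h2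

/-! ### Atomicity of the projection -/

/-- A compact space `M` parametrized by `(p, q)` onto the spiral graph is a pseudosuspension.
Allowing an abstract `M`, and not only the subset of `X × Y`, leaves its universe free. -/
theorem isPseudosuspension_of_spiral {M X Y A : Type*} [TopologicalSpace M] [CompactSpace M]
    [MetrizableSpace M] [MetricSpace X] [TopologicalSpace Y] [T2Space Y] [TopologicalSpace A]
    (hX : IsContinuum X) (hA : IsContinuum A) (a : X) {ψ : ℝ≥0 → Y} {G : A → Y}
    (hG : Continuous G) (hGinj : Function.Injective G) (hcl : ∀ b, MapClusterPt (G b) atTop ψ)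
    {p : M → X} {q : M → Y} (hp : Continuous p) (hq : Continuous q)
    (hinj : ∀ m m', p m = p m' → q m = q m' → m = m')
    (hmem : ∀ m, (p m, q m) ∈ spiralGraph a ψ (range G))
    (hsurj : ∀ z ∈ spiralGraph a ψ (range G), ∃ m, p m = z.1 ∧ q m = z.2) :
    IsPseudosuspension A a p := by
  obtain ⟨-, hXc, hXconn, -⟩ := hX
  obtain ⟨⟨b₀⟩, hAc, hAconn, -⟩ := hA
  have hqφ : ∀ m, p m ≠ a → q m = ψ (nndist (p m) a)⁻¹ := fun m hm => by
    rcases hmem m with h | h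
    · exact h.2
    · exact absurd h.1 hm
  have hqG : ∀ m, p m = a → q m ∈ range G := fun m hm => by
    rcases hmem m with h | h
    · exact absurd hm h.1
    · exact h.2
  have hpsurj : Function.Surjective p := fun x => by
    by_cases hx : x = a
    · obtain ⟨m, hm, -⟩ := hsurj (a, G b₀) (Or.inr ⟨rfl, mem_range_self _⟩)
      exact ⟨m, hm.trans hx.symm⟩
    · obtain ⟨m, hm, -⟩ := hsurj (x, ψ (nndist x a)⁻¹) (Or.inl ⟨hx, rfl⟩)
      exact ⟨m, hm⟩
  have hoff : ∀ m m', p m ≠ a → p m = p m' → m = m' := fun m m' hm h =>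
    hinj m m' h (by rw [hqφ m hm, hqφ m' (h ▸ hm), h])
  have hpcl : IsClosedMap p := hp.isClosedMap
  have hFc : ∀ x, IsCompact (p ⁻¹' {x}) := fun x => (isClosed_singleton.preimage hp).isCompact
  have hfib : Nonempty (↥(p ⁻¹' ({a} : Set X)) ≃ₜ A) := by
    have := isCompact_iff_compactSpace.1 (hFc a)
    have h1 : IsEmbedding (fun m : p ⁻¹' {a} => q m) :=
      ((hq.comp continuous_subtype_val).isClosedEmbedding fun m m' h =>
        Subtype.ext (hinj m.1 m'.1 (Eq.trans m.2 (Eq.symm m'.2)) h)).isEmbedding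
    have h2 : IsEmbedding G := (hG.isClosedEmbedding hGinj).isEmbedding
    have hr : range (fun m : p ⁻¹' {a} => q m) = range G := by
      apply Subset.antisymm
      · rintro _ ⟨m, rfl⟩
        exact hqG m m.2
      · rintro y hy
        obtain ⟨m, hm, hm'⟩ := hsurj (a, y) (Or.inr ⟨rfl, hy⟩)
        exact ⟨⟨m, hm⟩, hm'⟩
    exact ⟨h1.toHomeomorph.trans ((Homeomorph.setCongr hr).trans h2.toHomeomorph.symm)⟩
  have hsing : ∀ m, p m ≠ a → p ⁻¹' {p m} = {m} := fun m hm => by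
    ext m'
    exact ⟨fun h => (hoff m m' hm (Eq.symm h)).symm, fun h => by rw [h]; rfl⟩
  have hFconn : ∀ x, IsConnected (p ⁻¹' {x}) := fun x => by
    by_cases hx : x = a
    · subst hx
      obtain ⟨e⟩ := hfib
      have : ConnectedSpace (p ⁻¹' {x}) := e.symm.surjective.connectedSpace e.symm.continuous
      exact isConnected_iff_connectedSpace.2 this
    · obtain ⟨m, rfl⟩ := hpsurj x
      rw [hsing m hx]
      exact isConnected_singleton
  have hterm : ∀ Z : Set M, IsSubcontinuum Z → (Z ∩ p ⁻¹' {a}).Nonempty →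
      (Z \ p ⁻¹' {a}).Nonempty → p ⁻¹' {a} ⊆ Z := by
    rintro Z ⟨hZc, hZconn⟩ ⟨m₀, hm₀Z, hm₀⟩ ⟨m₁, hm₁Z, hm₁⟩ m hm
    have hm₀ : p m₀ = a := hm₀
    have hm₁ : p m₁ ≠ a := hm₁
    have hm : p m = a := hm
    obtain ⟨b, hb⟩ := hqG m hm
    have hδ : 0 < nndist (p m₁) a := pos_iff_ne_zero.2 (nndist_eq_zero.not.2 hm₁)
    -- By connectedness `d(p ·, a)` takes every value in `[0, d(p m₁, a)]` on `Z`.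
    have hlev : ∀ t ≤ nndist (p m₁) a, ∃ z ∈ Z, nndist (p z) a = t := fun t ht => by
      have hI := hZconn.isPreconnected.intermediate_value hm₀Z hm₁Z
        (f := fun z => nndist (p z) a) (by fun_prop)
      simp only [hm₀, nndist_self] at hI
      exact hI ⟨zero_le, ht⟩
    have hev : ∀ᶠ s in (atTop : Filter ℝ≥0), s⁻¹ ≤ nndist (p m₁) a := by
      filter_upwards [eventually_ge_atTop (nndist (p m₁) a)⁻¹] with s hs
      exact inv_le_of_inv_le₀ hδ hs
    have hchoose : ∀ s : ℝ≥0, ∃ z, s⁻¹ ≤ nndist (p m₁) a → z ∈ Z ∧ nndist (p z) a = s⁻¹ :=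
      fun s => by
        by_cases hs : s⁻¹ ≤ nndist (p m₁) a
        · obtain ⟨z, hz, hz'⟩ := hlev _ hs
          exact ⟨z, fun _ => ⟨hz, hz'⟩⟩
        · exact ⟨m, fun h => absurd h hs⟩
    choose z hz using hchoose
    -- An ultrafilter along which `ψ` tends to `G b`, and then the limit of `z` along it.
    obtain ⟨U, hU, hUψ⟩ := mapClusterPt_iff_ultrafilter.1 (hcl b)
    have hUZ : ∀ᶠ s in (U : Filter ℝ≥0), z s ∈ Z := by
      filter_upwards [hU hev] with s hs using (hz s hs).1
    obtain ⟨w, hwZ, hw⟩ := hZc.ultrafilter_le_nhds (U.map z) (le_principal_iff.2 hUZ)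
    have hw : Tendsto z U (𝓝 w) := hw
    have hpw : p w = a := by
      have h1 : Tendsto (fun s => nndist (p (z s)) a) U (𝓝 (nndist (p w) a)) :=
        ((hp.tendsto w).comp hw).nndist tendsto_const_nhds
      have h2 : Tendsto (fun s => nndist (p (z s)) a) U (𝓝 0) := by
        refine (tendsto_inv_atTop_zero.mono_left hU).congr' ?_
        filter_upwards [hU hev] with s hs using (hz s hs).2.symm
      exact nndist_eq_zero.1 (tendsto_nhds_unique h1 h2)
    have hqw : q w = G b := by
      refine tendsto_nhds_unique ((hq.tendsto w).comp hw) (hUψ.congr' ?_)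
      filter_upwards [hU hev, hU (eventually_gt_atTop 0)] with s hs hs0
      have hd := (hz s hs).2
      have hne : p (z s) ≠ a := fun h => by
        rw [h, nndist_self] at hd
        exact (inv_pos.2 hs0).ne hd
      simp [hqφ _ hne, hd]
    rwa [hinj m w (hm.trans hpw.symm) (hb.symm.trans hqw.symm)]
  have hMconn : ConnectedSpace M := by
    have h := (hpcl.isQuotientMap hp hpsurj).isCoinducing.isConnected_preimage_of_isClosed
      hFconn isClosed_univ isConnected_univ
    rw [preimage_univ] at h
    exact connectedSpace_iff_univ.2 h
  refine ⟨⟨hMconn.toNonempty, inferInstance, hMconn, inferInstance⟩, hpsurj, ⟨hp, fun x => ?_⟩,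
    hfib, ?_⟩
  · refine ⟨⟨hFc x, hFconn x⟩, ?_⟩
    by_cases hx : x = a
    · subst hx
      exact hterm
    · obtain ⟨m, rfl⟩ := hpsurj x
      rw [hsing m hx]
      rintro Z - ⟨m', hm', rfl⟩ -
      exact singleton_subset_iff.2 hm'
  · refine isHomeomorph_iff_continuous_isClosedMap_bijective.2
      ⟨hp.restrictPreimage, hpcl.restrictPreimage _, fun m m' h => ?_,
        hpsurj.restrictPreimage _⟩
    exact Subtype.ext (hoff m m' m.2 (congrArg Subtype.val h))

/-! ### The pseudosuspension mapping onto `W` -/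

theorem stmt_13 {W : Type u} [TopologicalSpace W] (L : Set W)
    (hW : IsRayCompactification W L)
    {X A : Type v} [TopologicalSpace X] [TopologicalSpace A]
    (hX : IsContinuum X) (hA : IsContinuum A) (a : X)
    (f : A → W) (hf : Continuous f) (hfsurj : Function.Surjective f)
    (Aseq : ℕ → Set A) (hmono : Monotone Aseq)
    (hsub : ∀ i, IsSubcontinuum (Aseq i)) (hinL : ∀ i, Aseq i ⊆ f ⁻¹' L)
    (hdense : Dense (⋃ i, Aseq i)) :
    ∃ (M : TopSpace) (p : M.carrier → X), IsPseudosuspension A a p ∧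
      ∃ g : M.carrier → W, Continuous g ∧ Function.Surjective g := by
  obtain ⟨hWc, hWm, -, -, ⟨h⟩⟩ := hW
  have hX' := hX
  have hA' := hA
  obtain ⟨-, hXc, -, hXm⟩ := hX'
  obtain ⟨hAne, hAc, -, hAm⟩ := hA'
  let _ := metrizableSpaceMetric W
  let _ := metrizableSpaceMetric X
  let _ := metrizableSpaceMetric A
  obtain ⟨e, he⟩ := KuratowskiEmbedding.exists_isometric_embedding A
  -- The parametrization of the ray, constant on `(-∞, 0]`, and its inverse coordinate `σ` on `L`.
  let r : ℝ → W := fun s => (h.symm ⟨max s 0, le_max_right s 0⟩ : W)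
  have hr : Continuous r := by
    refine continuous_subtype_val.comp (h.symm.continuous.comp ?_)
    exact Continuous.subtype_mk (by fun_prop) _
  have hrσ : ∀ l : L, r (h l : ℝ) = l := fun l => by
    have : (⟨max (h l : ℝ) 0, le_max_right (h l : ℝ) 0⟩ : Ici (0 : ℝ)) = h l :=
      Subtype.ext (max_eq_left (h l).2)
    simp only [r, this, Homeomorph.symm_apply_apply]
  let G : A → ℓ^∞(ℕ, ℝ) × W := fun b => (e b, f b)
  have hG : Continuous G := he.continuous.prodMk hf
  have hGinj : Function.Injective G := fun b b' hb => he.injective (congrArg Prod.fst hb)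
  let Φ : ℓ^∞(ℕ, ℝ) × ℝ → ℓ^∞(ℕ, ℝ) × W := fun z => (z.1, r z.2)
  have hΦ : Continuous Φ := continuous_fst.prodMk (hr.comp continuous_snd)
  have hpath : ∀ i, ∀ u ∈ Aseq i, ∀ v ∈ Aseq i, ∀ ε : ℝ, 0 < ε →
      ∃ γ : Path (G u) (G v), ∀ t, infDist (γ t) (range G) < ε := by
    intro i u hu v hv ε hε
    -- The lift of `G` through `Φ` over `Aᵢ`.
    let lift : Aseq i → ℓ^∞(ℕ, ℝ) × ℝ := fun b => (e b, (h ⟨f b, hinL i b.2⟩ : ℝ))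
    have hlift : Continuous lift := by
      refine (he.continuous.comp continuous_subtype_val).prodMk
        (continuous_subtype_val.comp (h.continuous.comp ?_))
      exact Continuous.subtype_mk (hf.comp continuous_subtype_val) _
    have hΦl : ∀ b, Φ (lift b) = G b := fun b => by simp only [Φ, lift, G, hrσ]
    have := isPreconnected_iff_preconnectedSpace.1 (hsub i).2.isPreconnected
    obtain ⟨γ, hγ⟩ := exists_path_near hΦ (isPreconnected_range hlift) (R := range G)
      (by rintro _ ⟨b, rfl⟩; exact ⟨b, (hΦl b).symm⟩) hε
      (mem_range_self ⟨u, hu⟩) (mem_range_self ⟨v, hv⟩)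
    exact ⟨γ.cast (hΦl ⟨u, hu⟩).symm (hΦl ⟨v, hv⟩).symm, hγ⟩
  obtain ⟨ψ, hψ, hlim, hcl⟩ := exists_spiral hG hmono (hsub 0).2.nonempty hdense hpath
  have hM₀ : IsCompact (spiralGraph a ψ (range G)) :=
    isCompact_spiralGraph a hψ (isCompact_range hG) (range_nonempty G) hlim
  -- A homeomorphic copy of the spiral graph inside `ℓ^∞(ℕ)` lives in `Type`.
  have := isCompact_iff_compactSpace.1 hM₀
  obtain ⟨ι, hι⟩ := KuratowskiEmbedding.exists_isometric_embedding (spiralGraph a ψ (range G))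
  let k := hι.isEmbedding.toHomeomorph
  have : CompactSpace (range ι) := isCompact_iff_compactSpace.1 (isCompact_range hι.continuous)
  have hk : Continuous fun m => (k.symm m : X × (ℓ^∞(ℕ, ℝ) × W)) :=
    continuous_subtype_val.comp k.symm.continuous
  refine ⟨⟨range ι⟩, fun m => (k.symm m).1.1, ?_, fun m => (k.symm m).1.2.2,
    continuous_snd.comp (continuous_snd.comp hk), fun w => ?_⟩
  · refine isPseudosuspension_of_spiral hX hA a hG hGinj hcl (q := fun m => (k.symm m).1.2)
      (continuous_fst.comp hk) (continuous_snd.comp hk) (fun m m' h₁ h₂ => ?_)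
      (fun m => (k.symm m).2) (fun z hz => ⟨k ⟨z, hz⟩, by simp, by simp⟩)
    exact k.symm.injective (Subtype.ext (Prod.ext h₁ h₂))
  · obtain ⟨b, rfl⟩ := hfsurj w
    exact ⟨k ⟨(a, G b), Or.inr ⟨rfl, mem_range_self b⟩⟩, by simp [G]⟩
end
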